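/- Let K be a field and n ≥ 3. Let P₁, P₂ ∈ Sp(2n, K) be cyclic and strictly hyperbolic symplectic matrices. Then for every M ∈ Sp(2n, K) that is not a scalar matrix, there exist S₁, S₂ ∈ Sp(2n, K) such that M = (S₁ P₁ S₁⁻¹) · (S₂ P₂ S₂⁻¹). In other words, the product of the two Sp(2n,K)-conjugacy classes of P₁ and P₂ contains every nonscalar element of Sp(2n, K). -/

import Mathlib

open Matrix Polynomial

noncomputable section

/-- The standard symplectic form matrix `G = [[0, Iₙ], [-Iₙ, 0]]`. -/
def sympJ (n : ℕ) (K : Type*) [Field K] : Matrix (Fin n ⊕ Fin n) (Fin n ⊕ Fin n) K :=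
  Matrix.fromBlocks 0 1 (-1) 0

/-- Membership in the standard symplectic group `Sp(2n, K)`: `P G Pᵀ = G`. -/
def IsSymplectic {n : ℕ} {K : Type*} [Field K]
    (P : Matrix (Fin n ⊕ Fin n) (Fin n ⊕ Fin n) K) : Prop :=
  P * sympJ n K * Pᵀ = sympJ n K

/-- A matrix is cyclic if its characteristic polynomial equals its minimal polynomial. -/
def IsCyclicMat {ι : Type*} [Fintype ι] [DecidableEq ι] {K : Type*} [Field K]
    (A : Matrix ι ι K) : Prop :=
  A.charpoly = minpoly K A

/-- The reciprocal polynomial `q*(x) = q(0)⁻¹ xⁿ q(1/x)` of a polynomial `q`. -/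
def recipPoly {K : Type*} [Field K] (q : Polynomial K) : Polynomial K :=
  Polynomial.C (q.coeff 0)⁻¹ * q.reverse

/-- A symplectic matrix is strictly hyperbolic if its minimal polynomial is `q q*`
with `q` monic of degree `n`, `q(0) ≠ 0`, and `q` coprime to its reciprocal `q*`. -/
def IsStrictlyHyperbolic {n : ℕ} {K : Type*} [Field K]
    (P : Matrix (Fin n ⊕ Fin n) (Fin n ⊕ Fin n) K) : Prop :=
  ∃ q : Polynomial K, q.Monic ∧ q.natDegree = n ∧ q.coeff 0 ≠ 0 ∧
    IsCoprime q (recipPoly q) ∧ minpoly K P = q * recipPoly q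


section basics
variable {K : Type*} [Field K] {V : Type*} [AddCommGroup V] [Module K V]

/-- `D` acts cyclically on `L`, with polynomial `p`. -/
def CycOn (L : Submodule K V) (D : V →ₗ[K] V) (p : K[X]) : Prop :=
  (∀ x ∈ L, D x ∈ L) ∧ ∃ y ∈ L, aeval D p y = 0 ∧
    ∀ W : Submodule K V, y ∈ W → (∀ x ∈ W, D x ∈ W) → L ≤ W

theorem exists_lin_of_indep {ι : Type*} {e : ι → V} (he : LinearIndependent K e) {W : Type*}
    [AddCommGroup W] [Module K W] (z : ι → W) :
    ∃ f : V →ₗ[K] W, ∀ i, f (e i) = z i := by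
  let b := Module.Basis.extend (K := K) (s := Set.range e) he.linearIndepOn_id
  classical
  refine ⟨b.constr K (fun x => if h : (x : V) ∈ Set.range e then z h.choose else 0), fun i => ?_⟩
  have hm : e i ∈ (he.linearIndepOn_id).extend (Set.subset_univ (Set.range e)) :=
    Module.Basis.subset_extend _ ⟨i, rfl⟩
  have : e i = b ⟨e i, hm⟩ := by simp [b]
  conv_lhs => rw [this]
  rw [Module.Basis.constr_basis]
  have h : e i ∈ Set.range e := ⟨i, rfl⟩
  simp only [h, dif_pos]
  congr 1
  exact he.injective h.choose_spec

theorem aeval_apply_sum (D : V →ₗ[K] V) (p : K[X]) (n : ℕ) (hp : p.natDegree < n) (x : V) :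
    aeval D p x = ∑ i ∈ Finset.range n, p.coeff i • (D ^ i) x := by
  rw [aeval_eq_sum_range' hp]
  simp [LinearMap.sum_apply]

theorem hook (n h : ℕ) (hh : h < n) (e : ℕ → V)
    (he : LinearIndependent K (fun i : Fin n => e i)) (p : K[X]) (hp : p.Monic)
    (hpn : p.natDegree = n) (L : Submodule K V) (heL : ∀ i < n, e i ∈ L)
    (hL : ∀ W : Submodule K V, (∀ i < n, e i ∈ W) → L ≤ W) :
    ∃ D : V →ₗ[K] V, CycOn L D p ∧ (∀ i < h, D (e i) = e (i+1)) ∧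
      (∀ i, h ≤ i → i + 1 < n → D (e i) = e (i+1) - p.coeff (n-1-(i-h)) • e h) ∧
      D (e (n-1)) = - ∑ i ∈ Finset.range (h+1), p.coeff i • e i := by
  classical
  obtain ⟨D, hD⟩ := exists_lin_of_indep he (fun i : Fin n =>
    if (i:ℕ) + 1 = n then - ∑ i ∈ Finset.range (h+1), p.coeff i • e i else
    if (i:ℕ) < h then e (i+1) else e (i+1) - p.coeff (n-1-(i-h)) • e h)
  have h1 : ∀ i < h, D (e i) = e (i+1) := by
    intro i hi
    have := hD ⟨i, by omega⟩
    simp only at this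
    rw [this, if_neg (by omega), if_pos hi]
  have h2 : ∀ i, h ≤ i → i + 1 < n → D (e i) = e (i+1) - p.coeff (n-1-(i-h)) • e h := by
    intro i hi hin
    have := hD ⟨i, by omega⟩
    simp only at this
    rw [this, if_neg (by omega), if_neg (by omega)]
  have h3 : D (e (n-1)) = - ∑ i ∈ Finset.range (h+1), p.coeff i • e i := by
    have := hD ⟨n-1, by omega⟩
    simp only at this
    rw [this, if_pos (by omega)]
  refine ⟨D, ⟨?_, e 0, heL 0 (by omega), ?_, ?_⟩, h1, h2, h3⟩
  · have : L ≤ L.comap D := by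
      apply hL
      intro i hi
      rw [Submodule.mem_comap]
      by_cases hi1 : i + 1 = n
      · have : i = n - 1 := by omega
        subst this
        rw [h3]
        apply neg_mem
        apply sum_mem
        intro j hj
        rw [Finset.mem_range] at hj
        exact L.smul_mem _ (heL j (by omega))
      · by_cases hih : i < h
        · rw [h1 i hih]; exact heL _ (by omega)
        · rw [h2 i (by omega) (by omega)]
          exact L.sub_mem (heL _ (by omega)) (L.smul_mem _ (heL _ hh))
    exact fun x hx => this hx
  · have pw : ∀ i ≤ h, (D ^ i) (e 0) = e i := by
      intro i
      induction i with
      | zero => simp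
      | succ i ih => intro hi; rw [pow_succ', Module.End.mul_apply, ih (by omega), h1 i (by omega)]
    have horn : ∀ j, h + j < n →
        ∑ k ∈ Finset.range (j+1), p.coeff (n-j+k) • (D ^ k) (e h) = e (h+j) := by
      intro j
      induction j with
      | zero =>
        intro _
        have : p.coeff n = 1 := by rw [← hpn]; exact hp
        simp [this]
      | succ j ih =>
        intro hj
        have := congrArg D (ih (by omega))
        rw [h2 (h+j) (by omega) (by omega), map_sum] at this
        rw [Finset.sum_range_succ', add_assoc h j 1 |>.symm]
        have e1 : h + j - h = j := by omega
        rw [e1] at this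
        have e2 : n - (j+1) + 0 = n - 1 - j := by omega
        rw [e2]
        rw [eq_sub_iff_add_eq] at this
        rw [← this]
        congr 1
        apply Finset.sum_congr rfl
        intro k _
        rw [map_smul, pow_succ', Module.End.mul_apply]
        congr 2
        omega
    rw [aeval_apply_sum D p (n+1) (by omega)]
    have hs : n + 1 = (h+1) + (n-1-h+1) := by omega
    rw [hs, Finset.sum_range_add]
    have := congrArg D (horn (n-1-h) (by omega))
    have e1 : h + (n-1-h) = n - 1 := by omega
    rw [e1, h3, map_sum] at this
    have e2 : ∑ x ∈ Finset.range (n-1-h+1), p.coeff (h+1+x) • (D ^ (h+1+x)) (e 0) =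
      - ∑ i ∈ Finset.range (h+1), p.coeff i • e i := by
      rw [← this]
      apply Finset.sum_congr rfl
      intro k _
      rw [map_smul, ← pw h le_rfl]
      have e3 : n - (n-1-h) + k = h+1+k := by omega
      rw [e3, ← Module.End.mul_apply, ← Module.End.mul_apply, ← pow_succ', ← pow_add]
      congr 3
      omega
    rw [e2, ← sub_eq_add_neg, sub_eq_zero]
    apply Finset.sum_congr rfl
    intro i hi
    rw [Finset.mem_range] at hi
    rw [pw i (by omega)]
  · intro W h0 hW
    apply hL
    intro i
    have ha : ∀ i ≤ h, e i ∈ W := by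
      intro i
      induction i with
      | zero => intro _; exact h0
      | succ i ih => intro hi; rw [← h1 i (by omega)]; exact hW _ (ih (by omega))
    induction i with
    | zero => intro _; exact h0
    | succ i ih =>
      intro hi
      by_cases hih : i < h
      · exact ha _ hih
      · have := h2 i (by omega) hi
        rw [eq_comm, sub_eq_iff_eq_add] at this
        rw [this]
        exact W.add_mem (hW _ (ih (by omega))) (W.smul_mem _ (ha h le_rfl))

end basics

section chain
variable {K : Type*} [Field K] {V : Type*} [AddCommGroup V] [Module K V]

/-- `f a, …, f b` generate the subspace `L`. -/
def GenBy (f : ℕ → V) (a b : ℕ) (L : Submodule K V) : Prop :=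
  (∀ i, a ≤ i → i ≤ b → f i ∈ L) ∧
    ∀ W : Submodule K V, (∀ i, a ≤ i → i ≤ b → f i ∈ W) → L ≤ W

theorem exists_dual_ne {U : Submodule K V} {z : V} (hz : z ∉ U) :
    ∃ φ : V →ₗ[K] K, φ z = 1 ∧ ∀ x ∈ U, φ x = 0 := by
  obtain ⟨f, hf, hU⟩ := Submodule.exists_dual_map_eq_bot_of_notMem hz inferInstance
  refine ⟨(f z)⁻¹ • f, by simp [hf], fun x hx => ?_⟩
  have : f x ∈ U.map f := ⟨x, hx, rfl⟩
  rw [hU, Submodule.mem_bot] at this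
  simp [this]

variable [FiniteDimensional K V]

theorem exists_mem_notMem_of_finrank {X Y : Submodule K V}
    (h : Module.finrank K X < Module.finrank K Y) : ∃ z ∈ Y, z ∉ X := by
  by_contra hc
  push Not at hc
  have : Y ≤ X := hc
  have := Submodule.finrank_mono this
  omega

theorem hyper_finrank (X : Submodule K V) (φ : V →ₗ[K] K) {x : V} (hx : x ∈ X) (hφ : φ x ≠ 0) :
    Module.finrank K (X ⊓ LinearMap.ker φ : Submodule K V) + 1 = Module.finrank K X := by
  have h1 := LinearMap.finrank_range_add_finrank_ker (φ.domRestrict X)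
  have h2 : LinearMap.range (φ.domRestrict X) = ⊤ := by
    apply LinearMap.range_eq_top.mpr
    apply LinearMap.surjective
    intro h
    apply hφ
    have := congrArg (fun f => f ⟨x, hx⟩) h
    simpa using this
  rw [h2, finrank_top, Module.finrank_self] at h1
  have h3 : LinearMap.ker (φ.domRestrict X) =
      (X ⊓ LinearMap.ker φ : Submodule K V).comap X.subtype := by
    ext z; simp
  rw [h3, LinearEquiv.finrank_eq (Submodule.comapSubtypeEquivOfLe inf_le_left)] at h1
  omega

theorem chain_lemma (M : V →ₗ[K] V) (hM : Function.Injective M) (d : ℕ) :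
    ∀ X Y : Submodule K V, X ≤ Y → (∀ x ∈ X, M x ∈ Y) → Module.finrank K X = d →
      Module.finrank K Y = d + 1 →
      ∃ (C : V →ₗ[K] V) (t s y : ℕ → V), GenBy t 0 d Y ∧ GenBy t 1 d X ∧ GenBy s 0 d Y ∧
        GenBy y 1 d X ∧ (∀ i, i < d → C (t (i+1)) = t i) ∧
        (∀ i, i < d → C (y (i+1)) = s i) ∧ (∀ i, i < d → M (y (i+1)) = s (i+1)) := by
  induction d with
  | zero =>
    intro X Y hXY hMX hX hY
    obtain ⟨v, hv, hv'⟩ := finrank_eq_one_iff'.mp hY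
    have hX0 : X = ⊥ := Submodule.finrank_eq_zero.mp hX
    have g1 : GenBy (fun _ => (v : V)) 0 0 Y := by
      refine ⟨fun i _ _ => v.2, fun W hW z hz => ?_⟩
      obtain ⟨c, hc⟩ := hv' ⟨z, hz⟩
      have : z = c • (v : V) := by rw [← Submodule.coe_smul, hc]
      rw [this]
      exact W.smul_mem _ (hW 0 le_rfl le_rfl)
    have g0 : GenBy (fun _ => (v : V)) 1 0 X := by
      refine ⟨fun i h1 h2 => by omega, fun W hW => by rw [hX0]; exact bot_le⟩
    refine ⟨0, fun _ => v, fun _ => v, fun _ => v, g1, g0, g1, g0, ?_, ?_, ?_⟩ <;>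
    · intro i hi; omega
  | succ d ih =>
    intro X Y hXY hMX hX hY
    have : ∃ φ : V →ₗ[K] K, (∃ z ∈ Y, φ z ≠ 0) ∧ ∀ x ∈ X, φ (M x) = φ x := by
      have hlt : Module.finrank K (X.map (M - 1)) < Module.finrank K Y := by
        have := Submodule.finrank_map_le (M - 1) X
        omega
      obtain ⟨z, hz, hz'⟩ := exists_mem_notMem_of_finrank hlt
      obtain ⟨φ, h1, h2⟩ := exists_dual_ne hz'
      refine ⟨φ, ⟨z, hz, by rw [h1]; exact one_ne_zero⟩, fun x hx => ?_⟩
      have := h2 _ ⟨x, hx, rfl⟩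
      simpa [sub_eq_zero] using this
    obtain ⟨φ, ⟨z, hzY, hφz⟩, hφM⟩ := this
    by_cases hA : ∃ x ∈ X, φ x ≠ 0
    · have : ∃ x ∈ X, φ x = 1 := by
        obtain ⟨x, hx, hx0⟩ := hA
        exact ⟨(φ x)⁻¹ • x, X.smul_mem _ hx, by simp [hx0]⟩
      obtain ⟨x, hxX, hφx⟩ := this
      have hx0 : φ x ≠ 0 := by rw [hφx]; exact one_ne_zero
      have fX := hyper_finrank X φ hxX hx0
      have fY := hyper_finrank Y φ (hXY hxX) hx0
      obtain ⟨C', t', s', y', gt0, gt1, gs, gy, ct, cy, my⟩ :=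
        ih (X ⊓ LinearMap.ker φ) (Y ⊓ LinearMap.ker φ) (inf_le_inf_right _ hXY)
          (fun w hw => ⟨hMX w hw.1, by
            have h0 : φ w = 0 := hw.2
            change φ (M w) = 0
            rw [hφM w hw.1, h0]⟩) (by omega) (by omega)
      let C : V →ₗ[K] V := C' + φ.smulRight (t' d - C' x)
      have hC : ∀ w, φ w = 0 → C w = C' w := by intro w hw; simp [C, hw]
      have hCx : C x = t' d := by simp [C, hφx]
      have hdec : ∀ (U : Submodule K V) (u : V), u ∈ U → φ u ≠ 0 → ∀ W : Submodule K V,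
          U ⊓ LinearMap.ker φ ≤ W → u ∈ W → U ≤ W := by
        intro U u hu hu0 W h1 h2 w hw
        have : w - (φ w / φ u) • u ∈ U ⊓ LinearMap.ker φ :=
          ⟨U.sub_mem hw (U.smul_mem _ hu), by simp [hu0]⟩
        have := W.add_mem (h1 this) (W.smul_mem (φ w / φ u) h2)
        simpa using this
      have hYle : (Y ⊓ LinearMap.ker φ : Submodule K V) ≤ X.map C := by
        apply gt0.2
        intro i _ hi
        rcases Nat.lt_or_ge i d with h | h
        · have hm := gt1.1 (i+1) (by omega) (by omega)
          exact ⟨t' (i+1), hm.1, by rw [hC _ hm.2, ct i h]⟩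
        · have : i = d := by omega
          subst this
          exact ⟨x, hxX, hCx⟩
      obtain ⟨yy, hyX, hCy⟩ := hYle (gs.1 d (by omega) le_rfl)
      have hφy : φ yy ≠ 0 := by
        intro h0
        have : (Y ⊓ LinearMap.ker φ : Submodule K V) ≤
            (X ⊓ LinearMap.ker φ : Submodule K V).map C' := by
          apply gs.2
          intro i _ hi
          rcases Nat.lt_or_ge i d with h | h
          · exact ⟨y' (i+1), gy.1 (i+1) (by omega) (by omega), cy i h⟩
          · have : i = d := by omega
            subst this
            exact ⟨yy, ⟨hyX, h0⟩, by rw [← hC _ h0]; exact hCy⟩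
        have h1 := Submodule.finrank_mono this
        have h2 := Submodule.finrank_map_le C' (X ⊓ LinearMap.ker φ : Submodule K V)
        omega
      have hsy : φ (M yy) ≠ 0 := by rw [hφM _ hyX]; exact hφy
      have up : ∀ (f : ℕ → V) (a : V) (i : ℕ), i ≤ d → Function.update f (d+1) a i = f i := by
        intro f a i hi
        rw [Function.update_of_ne (by omega)]
      have gen : ∀ (f : ℕ → V) (u : V) (k : ℕ) (U : Submodule K V), k ≤ d + 1 →
          GenBy f k d (U ⊓ LinearMap.ker φ : Submodule K V) → u ∈ U → φ u ≠ 0 →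
          GenBy (Function.update f (d+1) u) k (d+1) U := by
        intro f u k U hk hg hu hu0
        refine ⟨fun i h1 h2 => ?_, fun W hW => ?_⟩
        · rcases Nat.lt_or_ge d i with h | h
          · have : i = d + 1 := by omega
            subst this
            simpa using hu
          · rw [up _ _ _ h]; exact (hg.1 i h1 h).1
        · apply hdec U u hu hu0 W
          · apply hg.2
            intro i h1 h2
            rw [← up f u i h2]
            exact hW i h1 (by omega)
          · simpa using hW (d+1) hk le_rfl
      refine ⟨C, Function.update t' (d+1) x, Function.update s' (d+1) (M yy),
        Function.update y' (d+1) yy, gen _ _ _ _ (by omega) gt0 (hXY hxX) hx0,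
        gen _ _ _ _ (by omega) gt1 hxX hx0, gen _ _ _ _ (by omega) gs (hMX _ hyX) hsy,
        gen _ _ _ _ (by omega) gy hyX hφy, ?_, ?_, ?_⟩
      · intro i hi
        rw [up _ _ i (by omega)]
        rcases Nat.lt_or_ge i d with h | h
        · rw [up _ _ _ (by omega), hC _ (gt1.1 (i+1) (by omega) (by omega)).2, ct i h]
        · have : i = d := by omega
          subst this
          simpa using hCx
      · intro i hi
        rw [up _ _ i (by omega)]
        rcases Nat.lt_or_ge i d with h | h
        · rw [up _ _ _ (by omega), hC _ (gy.1 (i+1) (by omega) (by omega)).2, cy i h]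
        · have : i = d := by omega
          subst this
          simpa using hCy
      · intro i hi
        rcases Nat.lt_or_ge i d with h | h
        · rw [up _ _ _ (by omega), up _ _ _ (by omega), my i h]
        · have : i = d := by omega
          subst this
          simp
    · push Not at hA
      have hXe : X = Y ⊓ LinearMap.ker φ := by
        apply Submodule.eq_of_le_of_finrank_eq
        · exact fun w hw => ⟨hXY hw, hA w hw⟩
        · have := hyper_finrank Y φ hzY hφz
          omega
      have hMXX : ∀ w ∈ X, M w ∈ X := by
        intro w hw
        rw [hXe]
        exact ⟨hMX w hw, by change φ (M w) = 0; rw [hφM w hw, hA w hw]⟩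
      have hMe : X.map M = X := by
        apply Submodule.eq_of_le_of_finrank_eq
        · rintro _ ⟨w, hw, rfl⟩; exact hMXX w hw
        · exact (Submodule.equivMapOfInjective M hM X).finrank_eq.symm
      obtain ⟨x, hxX, hxb⟩ := exists_mem_notMem_of_finrank (X := (⊥ : Submodule K V)) (Y := X)
        (by simp; omega)
      obtain ⟨ψ, hψx, -⟩ := exists_dual_ne hxb
      have hx0 : ψ x ≠ 0 := by rw [hψx]; exact one_ne_zero
      have fX := hyper_finrank X ψ hxX hx0
      obtain ⟨C', t', s', y', gt0, gt1, gs, gy, ct, cy, my⟩ :=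
        ih (X ⊓ LinearMap.ker ψ) X inf_le_left (fun w hw => hMXX w hw.1) (by omega) (by omega)
      let C : V →ₗ[K] V := C' + ψ.smulRight (z - C' x)
      have hC : ∀ w, ψ w = 0 → C w = C' w := by intro w hw; simp [C, hw]
      have hC'X : ∀ w ∈ X, ψ w = 0 → C' w ∈ X := by
        intro w hw hw0
        have : (X ⊓ LinearMap.ker ψ : Submodule K V) ≤ X.comap C' := by
          apply gt1.2
          intro i h1 h2
          rw [Submodule.mem_comap]
          obtain ⟨j, rfl⟩ : ∃ j, i = j + 1 := ⟨i - 1, by omega⟩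
          rw [ct j (by omega)]
          exact gt0.1 j (by omega) (by omega)
        exact this ⟨hw, hw0⟩
      have hφC : ∀ w ∈ X, C w ∈ Y ∧ φ (C w) = ψ w * φ z := by
        intro w hw
        have e : C w = C' (w - ψ w • x) + ψ w • z := by
          simp only [C, LinearMap.add_apply, LinearMap.smulRight_apply, map_sub, map_smul, smul_sub]
          abel
        have m : C' (w - ψ w • x) ∈ X :=
          hC'X _ (X.sub_mem hw (X.smul_mem _ hxX)) (by simp [hψx])
        rw [e]
        refine ⟨Y.add_mem (hXY m) (Y.smul_mem _ hzY), ?_⟩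
        rw [map_add, hA _ m, map_smul, smul_eq_mul, zero_add]
      have hdec : ∀ (u : V), u ∈ Y → φ u ≠ 0 → ∀ W : Submodule K V,
          X ≤ W → u ∈ W → Y ≤ W := by
        intro u hu hu0 W h1 h2 w hw
        have : w - (φ w / φ u) • u ∈ X := by
          rw [hXe]
          exact ⟨Y.sub_mem hw (Y.smul_mem _ hu), by simp [hu0]⟩
        have := W.add_mem (h1 this) (W.smul_mem (φ w / φ u) h2)
        simpa using this
      have hdec2 : ∀ (u : V), u ∈ X → ψ u ≠ 0 → ∀ W : Submodule K V,
          X ⊓ LinearMap.ker ψ ≤ W → u ∈ W → X ≤ W := by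
        intro u hu hu0 W h1 h2 w hw
        have : w - (ψ w / ψ u) • u ∈ X ⊓ LinearMap.ker ψ :=
          ⟨X.sub_mem hw (X.smul_mem _ hu), by simp [hu0]⟩
        have := W.add_mem (h1 this) (W.smul_mem (ψ w / ψ u) h2)
        simpa using this
      have ht0 : ψ (t' 0) ≠ 0 := by
        intro h0
        have : X ≤ (X ⊓ LinearMap.ker ψ : Submodule K V) := by
          apply gt0.2
          intro i _ hi
          rcases Nat.eq_zero_or_pos i with h | h
          · subst h; exact ⟨gt0.1 0 (by omega) (by omega), h0⟩
          · exact gt1.1 i h hi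
        have := Submodule.finrank_mono this
        omega
      have hs0 := gs.1 0 le_rfl (by omega)
      rw [← hMe] at hs0
      obtain ⟨yy, hyX, hMy⟩ := hs0
      have hyy : ψ yy ≠ 0 := by
        intro h0
        have : X ≤ (X ⊓ LinearMap.ker ψ : Submodule K V).map M := by
          apply gs.2
          intro i _ hi
          rcases Nat.eq_zero_or_pos i with h | h
          · subst h; exact ⟨yy, ⟨hyX, h0⟩, hMy⟩
          · obtain ⟨j, rfl⟩ : ∃ j, i = j + 1 := ⟨i - 1, by omega⟩
            exact ⟨y' (j+1), gy.1 _ (by omega) (by omega), my j (by omega)⟩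
        have h1 := Submodule.finrank_mono this
        have h2 := Submodule.finrank_map_le M (X ⊓ LinearMap.ker ψ : Submodule K V)
        omega
      have gen : ∀ (f : ℕ → V) (u : V), GenBy f 0 d X → u ∈ Y → φ u ≠ 0 →
          GenBy (fun i => Nat.casesOn (motive := fun _ => V) i u f) 0 (d+1) Y := by
        intro f u hg hu hu0
        refine ⟨fun i h1 h2 => ?_, fun W hW => ?_⟩
        · cases i with
          | zero => exact hu
          | succ i => exact hXY (hg.1 i (by omega) (by omega))
        · apply hdec u hu hu0 W
          · apply hg.2
            intro i h1 h2
            exact hW (i+1) (by omega) (by omega)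
          · exact hW 0 (by omega) (by omega)
      refine ⟨C, fun i => Nat.casesOn (motive := fun _ => V) i (C (t' 0)) t',
        fun i => Nat.casesOn (motive := fun _ => V) i (C yy) s',
        fun i => if i = 1 then yy else y' (i-1), gen _ _ gt0 (hφC _ (gt0.1 0 (by omega) (by omega))).1
          ?_, ?_, gen _ _ gs (hφC _ hyX).1 ?_, ?_, ?_, ?_, ?_⟩
      · rw [(hφC _ (gt0.1 0 (by omega) (by omega))).2]; exact mul_ne_zero ht0 hφz
      · refine ⟨fun i h1 h2 => ?_, fun W hW => ?_⟩
        · obtain ⟨j, rfl⟩ : ∃ j, i = j + 1 := ⟨i - 1, by omega⟩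
          exact gt0.1 j (by omega) (by omega)
        · exact gt0.2 W fun i h1 h2 => hW (i+1) (by omega) (by omega)
      · rw [(hφC _ hyX).2]; exact mul_ne_zero hyy hφz
      · refine ⟨fun i h1 h2 => ?_, fun W hW => ?_⟩
        · simp only
          split_ifs with h
          · exact hyX
          · exact (gy.1 (i-1) (by omega) (by omega)).1
        · apply hdec2 yy hyX hyy W
          · apply gy.2
            intro i h1 h2
            have := hW (i+1) (by omega) (by omega)
            simpa [show i ≠ 0 by omega] using this
          · simpa using hW 1 le_rfl (by omega)
      · intro i hi
        cases i with
        | zero => rfl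
        | succ i =>
          change C (t' (i+1)) = t' i
          rw [hC _ (gt1.1 (i+1) (by omega) (by omega)).2, ct i (by omega)]
      · intro i hi
        cases i with
        | zero => simp
        | succ i =>
          simp
          rw [hC _ (gy.1 (i+1) (by omega) (by omega)).2, cy i (by omega)]
      · intro i hi
        cases i with
        | zero => simpa using hMy
        | succ i => simpa using my i (by omega)

end chain

section sympl
set_option linter.unusedSectionVars false
variable {K : Type*} [Field K] {V : Type*} [AddCommGroup V] [Module K V]

theorem comm_aeval (D : V →ₗ[K] V) (p : K[X]) (x : V) : D (aeval D p x) = aeval D p (D x) := by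
  have h : D * aeval D p = aeval D p * D := by
    have := congrArg (aeval D) (mul_comm X p)
    simpa using this
  exact LinearMap.congr_fun h x

theorem aeval_mem {W : Submodule K V} {D : V →ₗ[K] V} (hW : ∀ x ∈ W, D x ∈ W) (f : K[X]) :
    ∀ x ∈ W, aeval D f x ∈ W := by
  induction f using Polynomial.induction_on' with
  | add p q hp hq => intro x hx; simpa using W.add_mem (hp x hx) (hq x hx)
  | monomial n a =>
    intro x hx
    rw [aeval_monomial, Module.End.mul_apply]
    rw [Module.algebraMap_end_apply]
    apply W.smul_mem
    induction n with
    | zero => simpa using hx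
    | succ n ih => rw [pow_succ', Module.End.mul_apply]; exact hW _ ih

/-- the cyclic subspace generated by `v` -/
def cycSpan (D : V →ₗ[K] V) (v : V) : Submodule K V :=
  LinearMap.range ((LinearMap.applyₗ v).comp (aeval D).toLinearMap : K[X] →ₗ[K] V)

theorem mem_cycSpan {D : V →ₗ[K] V} {v z : V} : z ∈ cycSpan D v ↔ ∃ f : K[X], aeval D f v = z := by
  simp [cycSpan]

theorem self_mem_cycSpan (D : V →ₗ[K] V) (v : V) : v ∈ cycSpan D v :=
  mem_cycSpan.mpr ⟨1, by simp⟩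

theorem cycSpan_inv {D : V →ₗ[K] V} {v z : V} (hz : z ∈ cycSpan D v) : D z ∈ cycSpan D v := by
  obtain ⟨f, rfl⟩ := mem_cycSpan.mp hz
  exact mem_cycSpan.mpr ⟨X * f, by simp⟩

theorem CycOn.aeval_zero {L : Submodule K V} {D : V →ₗ[K] V} {p : K[X]} (h : CycOn L D p) :
    ∀ x ∈ L, aeval D p x = 0 := by
  obtain ⟨-, y, -, hy, hW⟩ := h
  have : L ≤ LinearMap.ker (aeval D p) := hW _ hy (fun x hx => by
    rw [LinearMap.mem_ker] at hx ⊢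
    rw [← comm_aeval, hx, map_zero])
  exact fun x hx => this hx

theorem CycOn.inj {L : Submodule K V} {D : V →ₗ[K] V} {p : K[X]} (h : CycOn L D p)
    (hp : p.coeff 0 ≠ 0) : ∀ x ∈ L, D x = 0 → x = 0 := by
  intro x hx hD
  have h0 := h.aeval_zero x hx
  rw [← divX_mul_X_add p] at h0
  simp [hD] at h0
  exact h0.resolve_left hp

theorem CycOn.inj' {L : Submodule K V} {D : V →ₗ[K] V} {p : K[X]} (h : CycOn L D p)
    (hp : p.coeff 0 ≠ 0) : ∀ x ∈ L, ∀ y ∈ L, D x = D y → x = y := by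
  intro x hx y hy hxy
  rw [← sub_eq_zero]
  exact h.inj hp _ (L.sub_mem hx hy) (by rw [map_sub, hxy, sub_self])

theorem indep_of_cyc [FiniteDimensional K V] {L : Submodule K V} {D : V →ₗ[K] V} {p : K[X]} {y : V}
    (hy : aeval D p y = 0) (hp : p.Monic) (hn : p.natDegree = Module.finrank K L)
    (hL : ∀ W : Submodule K V, y ∈ W → (∀ x ∈ W, D x ∈ W) → L ≤ W) (f : K[X])
    (hf : f.degree < (Module.finrank K L : ℕ)) (hfy : aeval D f y = 0) : f = 0 := by
  set n := Module.finrank K L with hnd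
  let F : degreeLT K n →ₗ[K] V :=
    ((LinearMap.applyₗ y).comp (aeval D).toLinearMap : K[X] →ₗ[K] V).comp (degreeLT K n).subtype
  have hF : ∀ g : degreeLT K n, F g = aeval D (g : K[X]) y := fun g => rfl
  have hr : L ≤ LinearMap.range F := by
    refine le_trans (hL _ (self_mem_cycSpan D y) (fun x hx => cycSpan_inv hx)) ?_
    intro z hz
    obtain ⟨g, rfl⟩ := mem_cycSpan.mp hz
    refine ⟨⟨g %ₘ p, ?_⟩, ?_⟩
    · rw [mem_degreeLT, ← hn, ← degree_eq_natDegree hp.ne_zero]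
      exact degree_modByMonic_lt _ hp
    · rw [hF]
      simp only
      conv_rhs => rw [← modByMonic_add_div g p]
      simp [mul_comm p, hy]
  have h1 := Submodule.finrank_mono hr
  have h2 := LinearMap.finrank_range_add_finrank_ker F
  have h3 : Module.finrank K (degreeLT K n) = n := by
    rw [(degreeLTEquiv K n).finrank_eq]; simp
  have : FiniteDimensional K (degreeLT K n) := (degreeLTEquiv K n).symm.finiteDimensional
  have h4 : LinearMap.ker F = ⊥ := by
    apply Submodule.finrank_eq_zero.mp
    omega
  have h5 : (⟨f, mem_degreeLT.mpr hf⟩ : degreeLT K n) ∈ LinearMap.ker F := hfy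
  rw [h4, Submodule.mem_bot] at h5
  exact congrArg Subtype.val h5

theorem indep_of_gen [FiniteDimensional K V] {L : Submodule K V} {n : ℕ} {e : ℕ → V}
    (hn : Module.finrank K L = n)
    (heL : ∀ i < n, e i ∈ L) (hL : ∀ W : Submodule K V, (∀ i < n, e i ∈ W) → L ≤ W) :
    LinearIndependent K (fun i : Fin n => e i) := by
  rw [linearIndependent_iff_card_eq_finrank_span]
  have : Submodule.span K (Set.range fun i : Fin n => e i) = L := by
    apply le_antisymm
    · rw [Submodule.span_le]
      rintro _ ⟨i, rfl⟩
      exact heL i i.2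
    · exact hL _ fun i hi => Submodule.subset_span ⟨⟨i, hi⟩, rfl⟩
  rw [Set.finrank, this, hn, Fintype.card_fin]

/-- symplectic form -/
structure IsSympForm (B : LinearMap.BilinForm K V) : Prop where
  self : ∀ x, B x x = 0
  nd : ∀ x, (∀ y, B x y = 0) → x = 0

/-- Lagrangian subspace -/
structure IsLag (B : LinearMap.BilinForm K V) (L : Submodule K V) : Prop where
  iso : ∀ x ∈ L, ∀ y ∈ L, B x y = 0
  max : ∀ x, (∀ y ∈ L, B y x = 0) → x ∈ L

variable {B : LinearMap.BilinForm K V}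

theorem IsSympForm.neg (hB : IsSympForm B) (x y : V) : B x y = - B y x := by
  have := hB.self (x + y)
  simp [hB.self] at this
  exact eq_neg_of_add_eq_zero_left this

theorem IsSympForm.comm0 (hB : IsSympForm B) {x y : V} (h : B x y = 0) : B y x = 0 := by
  rw [hB.neg, h, neg_zero]

theorem IsSympForm.nondeg (hB : IsSympForm B) : B.Nondegenerate :=
  ⟨fun x hx => hB.nd x hx, fun x hx => hB.nd x fun y => hB.comm0 (hx y)⟩

theorem IsSympForm.refl (hB : IsSympForm B) : B.IsRefl := fun _ _ h => hB.comm0 h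

variable [FiniteDimensional K V]

theorem IsSympForm.finrank_perp (hB : IsSympForm B) (W : Submodule K V) :
    Module.finrank K (B.orthogonal W) + Module.finrank K W = Module.finrank K V := by
  have := LinearMap.BilinForm.finrank_orthogonal hB.nondeg W
  have h2 := Submodule.finrank_le W
  omega

theorem mem_orth {W : Submodule K V} {x : V} : x ∈ B.orthogonal W ↔ ∀ y ∈ W, B y x = 0 :=
  Iff.rfl

theorem IsLag.orth_eq {L : Submodule K V} (hL : IsLag B L) : B.orthogonal L = L :=
  le_antisymm (fun x hx => hL.max x hx) (fun x hx y hy => hL.iso y hy x hx)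

theorem IsLag.finrank (hB : IsSympForm B) {L : Submodule K V} (hL : IsLag B L) :
    2 * Module.finrank K L = Module.finrank K V := by
  have := hB.finrank_perp L
  rw [hL.orth_eq] at this
  omega

theorem isLag_of_finrank (hB : IsSympForm B) {L : Submodule K V}
    (hiso : ∀ x ∈ L, ∀ y ∈ L, B x y = 0) (hd : Module.finrank K V ≤ 2 * Module.finrank K L) :
    IsLag B L := by
  refine ⟨hiso, ?_⟩
  have h1 : L ≤ B.orthogonal L := fun x hx y hy => hiso y hy x hx
  have h2 := hB.finrank_perp L
  have h3 := Submodule.eq_of_le_of_finrank_le h1 (by omega)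
  intro x hx
  rw [h3]
  exact hx

theorem selfadj_aeval {T : V →ₗ[K] V} (hT : ∀ x y, B (T x) y = B x (T y)) (f : K[X]) :
    ∀ x y, B (aeval T f x) y = B x (aeval T f y) := by
  induction f using Polynomial.induction_on' with
  | add p q hp hq => intro x y; simp [hp, hq]
  | monomial n a =>
    intro x y
    rw [aeval_monomial, Module.End.mul_apply, Module.End.mul_apply]
    rw [Module.algebraMap_end_apply, Module.algebraMap_end_apply]
    simp only [map_smul, LinearMap.smul_apply]
    congr 1
    induction n generalizing x y with
    | zero => simp
    | succ n ih => rw [pow_succ', Module.End.mul_apply, hT, ih, ← Module.End.mul_apply, ← pow_succ, pow_succ']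

theorem cyc_iso (hB : IsSympForm B) {T : V →ₗ[K] V} (hT : ∀ x y, B (T x) y = B x (T y))
    (hT0 : ∀ x, B x (T x) = 0) (v : V) (f : K[X]) : B v (aeval T f v) = 0 := by
  have hp : ∀ k, ∀ x y, B ((T ^ k) x) y = B x ((T ^ k) y) := by
    intro k x y
    simpa using selfadj_aeval hT (X ^ k) x y
  induction f using Polynomial.induction_on' with
  | add p q hp hq => simp [hp, hq]
  | monomial n a =>
    rw [aeval_monomial, Module.End.mul_apply, Module.algebraMap_end_apply, map_smul]
    rcases Nat.even_or_odd' n with ⟨k, rfl | rfl⟩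
    · rw [two_mul, pow_add, Module.End.mul_apply, ← hp, hB.self, smul_zero]
    · rw [two_mul, add_assoc, pow_add, Module.End.mul_apply, ← hp, pow_succ', Module.End.mul_apply,
        hT0, smul_zero]

theorem exists_inv_lag (hB : IsSympForm B) {T : V →ₗ[K] V} (hT : ∀ x y, B (T x) y = B x (T y))
    (hT0 : ∀ x, B x (T x) = 0) (x : V) :
    ∃ L : Submodule K V, IsLag B L ∧ (∀ y ∈ L, T y ∈ L) ∧ x ∈ L := by
  let P : Submodule K V → Prop := fun W => (∀ a ∈ W, ∀ b ∈ W, B a b = 0) ∧ (∀ y ∈ W, T y ∈ W)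
  have add : ∀ W, P W → ∀ v, (∀ y ∈ W, B y v = 0) → P (W ⊔ cycSpan T v) := by
    rintro W ⟨h1, h2⟩ v hv
    have h3 : ∀ a ∈ W, ∀ f : K[X], B a (aeval T f v) = 0 := by
      intro a ha f
      rw [← selfadj_aeval hT]
      exact hv _ (aeval_mem h2 f a ha)
    refine ⟨fun a ha b hb => ?_, fun y hy => ?_⟩
    · obtain ⟨a1, ha1, a2, ha2, rfl⟩ := Submodule.mem_sup.mp ha
      obtain ⟨b1, hb1, b2, hb2, rfl⟩ := Submodule.mem_sup.mp hb
      obtain ⟨f, rfl⟩ := mem_cycSpan.mp ha2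
      obtain ⟨g, rfl⟩ := mem_cycSpan.mp hb2
      have e1 : B (aeval T f v) (aeval T g v) = 0 := by
        rw [selfadj_aeval hT, ← Module.End.mul_apply, ← map_mul]
        exact cyc_iso hB hT hT0 _ _
      simp [h1 a1 ha1 b1 hb1, h3 a1 ha1 g, hB.comm0 (h3 b1 hb1 f), e1]
    · obtain ⟨a1, ha1, a2, ha2, rfl⟩ := Submodule.mem_sup.mp hy
      rw [map_add]
      exact Submodule.add_mem_sup (h2 a1 ha1) (cycSpan_inv ha2)
  obtain ⟨L, ⟨hP, hx⟩, hmax⟩ := (wellFounded_gt (α := Submodule K V)).has_min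
    {W | P W ∧ x ∈ W} ⟨⊥ ⊔ cycSpan T x, add ⊥ ⟨by simp, by simp⟩ x (by simp),
      Submodule.mem_sup_right (self_mem_cycSpan T x)⟩
  refine ⟨L, ⟨hP.1, fun v hv => ?_⟩, hP.2, hx⟩
  by_contra hvL
  refine hmax (L ⊔ cycSpan T v) ⟨add L hP v hv, Submodule.mem_sup_left hx⟩ ?_
  refine lt_of_le_of_ne le_sup_left fun h => hvL ?_
  rw [h]
  exact Submodule.mem_sup_right (self_mem_cycSpan T v)

theorem exists_compl_lag (hB : IsSympForm B) {L I : Submodule K V} (hL : IsLag B L)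
    (hI : ∀ a ∈ I, ∀ b ∈ I, B a b = 0) (hd : ∀ a ∈ I, a ∈ L → a = 0) :
    ∃ L' : Submodule K V, IsLag B L' ∧ I ≤ L' ∧ IsCompl L L' := by
  obtain ⟨W, ⟨hW1, hW2, hIW⟩, hmax⟩ := (wellFounded_gt (α := Submodule K V)).has_min
    {W | (∀ a ∈ W, ∀ b ∈ W, B a b = 0) ∧ (∀ a ∈ W, a ∈ L → a = 0) ∧ I ≤ W} ⟨I, hI, hd, le_rfl⟩
  have dL := hL.finrank hB
  have dW := hB.finrank_perp W
  have dis : Disjoint L W := Submodule.disjoint_def.mpr fun a h1 h2 => hW2 a h2 h1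
  have key : Module.finrank K V ≤ 2 * Module.finrank K W := by
    by_contra hlt
    push Not at hlt
    have hnot : ¬ (B.orthogonal W ≤ W ⊔ L) := by
      intro hle
      have h1 : B.orthogonal (W ⊔ L) ≤ W := by
        have := LinearMap.BilinForm.orthogonal_le hle (B := B)
        rwa [LinearMap.BilinForm.orthogonal_orthogonal hB.nondeg hB.refl] at this
      have h2 : B.orthogonal W ⊓ L = ⊥ := by
        rw [eq_bot_iff]
        rintro a ⟨ha1, ha2⟩
        refine hW2 a (h1 ?_) ha2
        intro b hb
        obtain ⟨b1, hb1, b2, hb2, rfl⟩ := Submodule.mem_sup.mp hb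
        simp [ha1 b1 hb1, hL.iso b2 hb2 a ha2]
      have h3 := Submodule.finrank_sup_add_finrank_inf_eq (B.orthogonal W) L
      rw [h2, finrank_bot] at h3
      have h4 := Submodule.finrank_le (B.orthogonal W ⊔ L)
      omega
    obtain ⟨v, hv, hvn⟩ := SetLike.not_le_iff_exists.mp hnot
    have hvW : ∀ y ∈ W, B y v = 0 := hv
    refine hmax (W ⊔ Submodule.span K {v}) ⟨?_, ?_, hIW.trans le_sup_left⟩ ?_
    · intro a ha b hb
      obtain ⟨a1, ha1, a2, ha2, rfl⟩ := Submodule.mem_sup.mp ha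
      obtain ⟨b1, hb1, b2, hb2, rfl⟩ := Submodule.mem_sup.mp hb
      obtain ⟨c, rfl⟩ := Submodule.mem_span_singleton.mp ha2
      obtain ⟨d, rfl⟩ := Submodule.mem_span_singleton.mp hb2
      simp [hW1 a1 ha1 b1 hb1, hvW a1 ha1, hB.comm0 (hvW b1 hb1), hB.self]
    · intro a ha haL
      obtain ⟨a1, ha1, a2, ha2, rfl⟩ := Submodule.mem_sup.mp ha
      obtain ⟨c, rfl⟩ := Submodule.mem_span_singleton.mp ha2
      by_cases hc : c = 0
      · subst hc
        rw [zero_smul, add_zero] at haL ⊢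
        exact hW2 a1 ha1 haL
      · exfalso
        apply hvn
        have : v = c⁻¹ • ((a1 + c • v) - a1) := by
          rw [add_sub_cancel_left, smul_smul, inv_mul_cancel₀ hc, one_smul]
        rw [this]
        exact Submodule.smul_mem _ _ (Submodule.sub_mem _ (Submodule.mem_sup_right haL)
          (Submodule.mem_sup_left ha1))
    · refine lt_of_le_of_ne le_sup_left fun h => hvn ?_
      apply Submodule.mem_sup_left
      rw [h]
      exact Submodule.mem_sup_right (Submodule.mem_span_singleton_self v)
  refine ⟨W, isLag_of_finrank hB hW1 key, hIW, dis, ?_⟩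
  rw [codisjoint_iff]
  apply Submodule.eq_top_of_finrank_eq
  have h3 := Submodule.finrank_sup_add_finrank_inf_eq L W
  rw [dis.eq_bot, finrank_bot] at h3
  have h4 := Submodule.finrank_le (L ⊔ W)
  omega

theorem exists_ext (hB : IsSympForm B) {L L' L2 L2' : Submodule K V} (hL : IsLag B L)
    (hL' : IsLag B L') (hc : IsCompl L L') (hL2 : IsLag B L2) (hL2' : IsLag B L2')
    (hc2 : IsCompl L2 L2') (g : V →ₗ[K] V) (hg : ∀ x ∈ L, g x ∈ L2)
    (hg0 : ∀ x ∈ L, g x = 0 → x = 0) :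
    ∃ S : V →ₗ[K] V, (∀ x y, B (S x) (S y) = B x y) ∧ (∀ x ∈ L, S x = g x) ∧
      ∀ x ∈ L', S x ∈ L2' := by
  have hsur : L.map g = L2 := by
    apply Submodule.eq_of_le_of_finrank_eq
    · rintro _ ⟨x, hx, rfl⟩; exact hg x hx
    · have h1 := hL.finrank hB
      have h2 := hL2.finrank hB
      have h3 := LinearMap.finrank_range_add_finrank_ker (g.domRestrict L)
      have h4 : LinearMap.ker (g.domRestrict L) = ⊥ := by
        rw [LinearMap.ker_eq_bot']
        intro x hx
        exact Subtype.ext (hg0 x x.2 hx)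
      rw [h4, finrank_bot, LinearMap.range_domRestrict] at h3
      omega
  let F : L2' →ₗ[K] Module.Dual K L :=
    (LinearMap.compl₁₂ B (g.comp L.subtype) L2'.subtype).flip
  have hF : ∀ z x, F z x = B (g x) z := fun z x => rfl
  have hFi : Function.Injective F := by
    rw [← LinearMap.ker_eq_bot, LinearMap.ker_eq_bot']
    intro z hz
    apply Subtype.ext
    apply hB.nd
    intro u
    have hu : u ∈ L2 ⊔ L2' := by rw [hc2.sup_eq_top]; trivial
    obtain ⟨u1, hu1, u2, hu2, rfl⟩ := Submodule.mem_sup.mp hu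
    rw [← hsur] at hu1
    obtain ⟨x, hx, rfl⟩ := hu1
    have := LinearMap.congr_fun hz ⟨x, hx⟩
    rw [hF] at this
    simp [hB.comm0 this, hL2'.iso z z.2 u2 hu2]
  have hFd : Module.finrank K L2' = Module.finrank K (Module.Dual K L) := by
    rw [Subspace.dual_finrank_eq]
    have h1 := hL.finrank hB
    have h2 := hL2'.finrank hB
    omega
  let E := LinearEquiv.ofInjectiveOfFinrankEq F hFi hFd
  have hE : ∀ z, E z = F z := fun z => rfl
  let G : L' →ₗ[K] Module.Dual K L :=
    (LinearMap.compl₁₂ B L.subtype L'.subtype).flip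
  let S' : L' →ₗ[K] V := L2'.subtype.comp (E.symm.toLinearMap.comp G)
  have hS' : ∀ (x : L) (y : L'), B (g x) (S' y) = B x y := by
    intro x y
    have : F (E.symm (G y)) = G y := by rw [← hE, LinearEquiv.apply_symm_apply]
    have := LinearMap.congr_fun this x
    exact this
  have hS'm : ∀ y, S' y ∈ L2' := fun y => (E.symm (G y)).2
  let S := LinearMap.ofIsCompl hc (g.comp L.subtype) S'
  have h1 : ∀ x (hx : x ∈ L), S x = g x := fun x hx =>
    LinearMap.ofIsCompl_left_apply (h := hc) (φ := g.comp L.subtype) (ψ := S') ⟨x, hx⟩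
  have h2 : ∀ x (hx : x ∈ L'), S x = S' ⟨x, hx⟩ := fun x hx =>
    LinearMap.ofIsCompl_right_apply (h := hc) (φ := g.comp L.subtype) (ψ := S') ⟨x, hx⟩
  refine ⟨S, fun x y => ?_, h1, fun x hx => by rw [h2 x hx]; exact hS'm _⟩
  have hx : x ∈ L ⊔ L' := by rw [hc.sup_eq_top]; trivial
  have hy : y ∈ L ⊔ L' := by rw [hc.sup_eq_top]; trivial
  obtain ⟨x1, hx1, x2, hx2, rfl⟩ := Submodule.mem_sup.mp hx
  obtain ⟨y1, hy1, y2, hy2, rfl⟩ := Submodule.mem_sup.mp hy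
  have a1 := hS' ⟨x1, hx1⟩ ⟨y2, hy2⟩
  have a2 := hS' ⟨y1, hy1⟩ ⟨x2, hx2⟩
  simp only at a1 a2
  have a3 : B (S' ⟨x2, hx2⟩) (g y1) = B x2 y1 := by rw [hB.neg, a2, ← hB.neg]
  simp only [map_add, LinearMap.add_apply, h1 x1 hx1, h2 x2 hx2, h1 y1 hy1, h2 y2 hy2]
  rw [hL2.iso _ (hg x1 hx1) _ (hg y1 hy1), hL.iso x1 hx1 y1 hy1, a1, a3,
    hL2'.iso _ (hS'm _) _ (hS'm _), hL'.iso x2 hx2 y2 hy2]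

end sympl

section crit
set_option linter.unusedSectionVars false
variable {K : Type*} [Field K] {V : Type*} [AddCommGroup V] [Module K V]

/-- canonical form criterion -/
def Crit (n : ℕ) (X : V →ₗ[K] V) (a b : K[X]) : Prop :=
  aeval X (a * b) = 0 ∧ ∃ v, aeval X a v = 0 ∧ ∀ f : K[X], f.degree < n → aeval X f v = 0 → f = 0

/-- `a`, `b` are monic, coprime, of degree `n`, reciprocal to each other. -/
structure Recip (n : ℕ) (a b : K[X]) : Prop where
  am : a.Monic
  bm : b.Monic
  an : a.natDegree = n
  bn : b.natDegree = n
  cop : IsCoprime a b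
  recip : ∃ c : K, c ≠ 0 ∧ reflect n a = C c * b

theorem Recip.symm {n : ℕ} {a b : K[X]} (h : Recip n a b) : Recip n b a := by
  refine ⟨h.bm, h.am, h.bn, h.an, h.cop.symm, ?_⟩
  obtain ⟨c, hc, he⟩ := h.recip
  refine ⟨c⁻¹, inv_ne_zero hc, ?_⟩
  have := congrArg (reflect n) he
  have hi : reflect n (reflect n a) = a := by
    ext k
    rw [coeff_reflect, coeff_reflect, revAt_invol]
  rw [hi, reflect_C_mul] at this
  rw [this, ← mul_assoc, ← C_mul, inv_mul_cancel₀ hc, C_1, one_mul]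

theorem Recip.coeff_zero {n : ℕ} {a b : K[X]} (h : Recip n a b) : a.coeff 0 ≠ 0 := by
  obtain ⟨c, hc, he⟩ := h.recip
  have := congrArg (fun p => p.coeff n) he
  have hb : b.coeff n = 1 := by rw [← h.bn]; exact h.bm
  simp [coeff_reflect, revAt_le, hb] at this
  rw [this]; exact hc

theorem aeval_reflect (X Y : V →ₗ[K] V) (h : X * Y = 1) (N : ℕ) (f : K[X])
    (hf : f.natDegree ≤ N) : X ^ N * aeval Y f = aeval X (reflect N f) := by
  have hp : ∀ k, X ^ k * Y ^ k = 1 := by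
    intro k
    induction k with
    | zero => simp
    | succ k ih => rw [pow_succ, pow_succ', mul_assoc, ← mul_assoc X Y, h, one_mul, ih]
  have h2 : (reflect N f).natDegree < N + 1 := by
    rw [Nat.lt_succ_iff, natDegree_le_iff_coeff_eq_zero]
    intro k hk
    rw [coeff_reflect, revAt_eq_self_of_lt hk]
    exact coeff_eq_zero_of_natDegree_lt (by omega)
  rw [aeval_eq_sum_range' (Nat.lt_succ_of_le hf), aeval_eq_sum_range' h2, Finset.mul_sum,
    ← Finset.sum_range_reflect]
  apply Finset.sum_congr rfl
  intro k hk
  rw [Finset.mem_range] at hk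
  have e : N + 1 - 1 - k = N - k := by omega
  rw [e, coeff_reflect, revAt_le (by omega), mul_smul_comm]
  congr 1
  have : X ^ N = X ^ k * X ^ (N - k) := by rw [← pow_add]; congr 1; omega
  rw [this, mul_assoc, hp, mul_one]

theorem Crit.inv {n : ℕ} (hn : 0 < n) {X Y : V →ₗ[K] V} {a b : K[X]} (hr : Recip n a b)
    (hXY : X * Y = 1) (hYX : Y * X = 1) (h : Crit n X a b) : Crit n Y b a := by
  obtain ⟨h1, v, hv, hf⟩ := h
  obtain ⟨c, hc, hac⟩ := hr.recip
  obtain ⟨c', hc', hbc⟩ := hr.symm.recip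
  have ra := aeval_reflect X Y hXY n a hr.an.le
  have rb := aeval_reflect X Y hXY n b hr.bn.le
  rw [hac] at ra
  rw [hbc] at rb
  have pinj : ∀ k, ∀ z, (X ^ k) z = 0 → z = 0 := by
    intro k
    induction k with
    | zero => intro z hz; simpa using hz
    | succ k ih =>
      intro z hz
      apply ih
      rw [pow_succ', Module.End.mul_apply] at hz
      have := congrArg Y hz
      rw [← Module.End.mul_apply, hYX] at this
      simpa using this
  refine ⟨?_, v, ?_, ?_⟩
  · ext z
    apply pinj (n + n)
    have e := aeval_reflect X Y hXY (n + n) (b * a)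
      (natDegree_mul_le.trans (by rw [hr.an, hr.bn]))
    rw [reflect_mul b a hr.bn.le hr.an.le, hac, hbc] at e
    have e2 : C c' * a * (C c * b) = C (c' * c) * (a * b) := by rw [C_mul]; ring
    rw [e2, map_mul (aeval X), h1, mul_zero] at e
    exact LinearMap.congr_fun e z
  · apply pinj n
    have := LinearMap.congr_fun rb v
    simpa [hv] using this
  · intro f hfd hfv
    by_cases hf0 : f = 0
    · exact hf0
    have hfn : f.natDegree ≤ n - 1 := by
      have := (natDegree_lt_iff_degree_lt hf0).mpr hfd
      omega
    have rf := LinearMap.congr_fun (aeval_reflect X Y hXY (n-1) f hfn) v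
    rw [Module.End.mul_apply, hfv, map_zero] at rf
    have : reflect (n-1) f = 0 := by
      apply hf _ _ rf.symm
      rw [degree_lt_iff_coeff_zero]
      intro m hm
      rw [coeff_reflect, revAt_eq_self_of_lt (by omega)]
      exact coeff_eq_zero_of_natDegree_lt (by omega)
    rwa [reflect_eq_zero_iff] at this

theorem exists_cyc_vec [FiniteDimensional K V] (f : V →ₗ[K] V) :
    ∃ u : V, ∀ g : K[X], aeval f g u = 0 → minpoly K f ∣ g := by
  have hμ : minpoly K f ≠ 0 := minpoly.ne_zero (Algebra.IsIntegral.isIntegral f)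
  have key : ∀ d : K[X], d ∣ minpoly K f → ∃ u : V, aeval f d u = 0 ∧
      ∀ g : K[X], aeval f g u = 0 → d ∣ g := by
    intro d
    induction d using UniqueFactorizationMonoid.induction_on_coprime with
    | h0 => intro h; exact absurd (zero_dvd_iff.mp h) hμ
    | h1 hu => intro _; exact ⟨0, by simp, fun g _ => hu.dvd⟩
    | hpr i hp =>
      rename_i π
      intro h
      cases i with
      | zero => exact ⟨0, by simp, fun g _ => by simp⟩
      | succ i =>
        obtain ⟨e, he⟩ := h
        have hne : aeval f (π ^ i * e) ≠ 0 := by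
          intro h0
          have hd := minpoly.dvd K f h0
          rw [he] at hd hμ
          obtain ⟨k, hk⟩ := hd
          have : π ^ i * e * 1 = π ^ i * e * (π * k) := by
            rw [mul_one]; conv_lhs => rw [hk]
            ring
          have h2 : π ^ i * e ≠ 0 := by
            intro h3; apply hμ; rw [pow_succ, mul_right_comm, h3, zero_mul]
          have := mul_left_cancel₀ h2 this
          exact hp.not_isUnit (IsUnit.of_mul_eq_one _ this.symm)
        obtain ⟨x, hx⟩ : ∃ x, aeval f (π ^ i * e) x ≠ 0 := by
          by_contra hc
          push Not at hc
          exact hne (LinearMap.ext hc)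
        refine ⟨aeval f e x, ?_, fun g hg => ?_⟩
        · rw [← Module.End.mul_apply, ← map_mul, ← he, minpoly.aeval, LinearMap.zero_apply]
        · have h1 : aeval f (π ^ (i+1)) (aeval f e x) = 0 := by
            rw [← Module.End.mul_apply, ← map_mul, ← he, minpoly.aeval, LinearMap.zero_apply]
          classical
          obtain ⟨j, hj, hassoc⟩ := (dvd_prime_pow hp (i+1)).mp
            (EuclideanDomain.gcd_dvd_left (π ^ (i+1)) g)
          have hgz : aeval f (EuclideanDomain.gcd (π ^ (i+1)) g) (aeval f e x) = 0 := by
            rw [EuclideanDomain.gcd_eq_gcd_ab, mul_comm, mul_comm g]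
            simp only [map_add, map_mul, LinearMap.add_apply, Module.End.mul_apply]
            rw [hg, h1]
            simp
          rcases Nat.lt_or_ge i j with h | h
          · have : j = i + 1 := by omega
            subst this
            exact hassoc.symm.dvd.trans (EuclideanDomain.gcd_dvd_right _ _)
          · exfalso
            apply hx
            obtain ⟨k, hk⟩ := hassoc.dvd.trans (pow_dvd_pow π h)
            rw [map_mul, Module.End.mul_apply, hk, mul_comm, map_mul, Module.End.mul_apply, hgz,
              map_zero]
    | hcp hrel iha ihb =>
      rename_i a b
      intro h
      obtain ⟨ua, ha1, ha2⟩ := iha ((dvd_mul_right a b).trans h)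
      obtain ⟨ub, hb1, hb2⟩ := ihb ((dvd_mul_left b a).trans h)
      have hcop : IsCoprime a b := hrel.isCoprime
      refine ⟨ua + ub, ?_, fun g hg => ?_⟩
      · rw [map_add]
        have e1 : aeval f (a * b) ua = 0 := by
          rw [mul_comm, map_mul, Module.End.mul_apply, ha1, map_zero]
        have e2 : aeval f (a * b) ub = 0 := by
          rw [map_mul, Module.End.mul_apply, hb1, map_zero]
        rw [e1, e2, add_zero]
      · rw [map_add] at hg
        apply hcop.mul_dvd
        · have e1 : aeval f (b * g) ua = 0 := by
            have := congrArg (aeval f b) hg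
            rw [map_add, map_zero] at this
            have e2 : aeval f b (aeval f g ub) = 0 := by
              rw [← Module.End.mul_apply, ← map_mul, mul_comm, map_mul, Module.End.mul_apply, hb1,
                map_zero]
            rw [e2, add_zero] at this
            rw [map_mul, Module.End.mul_apply, this]
          exact hcop.dvd_of_dvd_mul_left (ha2 _ e1)
        · have e1 : aeval f (a * g) ub = 0 := by
            have := congrArg (aeval f a) hg
            rw [map_add, map_zero] at this
            have e2 : aeval f a (aeval f g ua) = 0 := by
              rw [← Module.End.mul_apply, ← map_mul, mul_comm, map_mul, Module.End.mul_apply, ha1,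
                map_zero]
            rw [e2, zero_add] at this
            rw [map_mul, Module.End.mul_apply, this]
          exact hcop.symm.dvd_of_dvd_mul_left (hb2 _ e1)
  obtain ⟨u, -, hu⟩ := key _ dvd_rfl
  exact ⟨u, hu⟩

theorem crit_of_minpoly [FiniteDimensional K V] {n : ℕ} (f : V →ₗ[K] V) {a b : K[X]}
    (hr : Recip n a b) (h : minpoly K f = a * b) : Crit n f a b := by
  obtain ⟨u, hu⟩ := exists_cyc_vec f
  refine ⟨by rw [← h]; exact minpoly.aeval K f, aeval f b u, ?_, ?_⟩
  · rw [← Module.End.mul_apply, ← map_mul, ← h, minpoly.aeval, LinearMap.zero_apply]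
  · intro g hg hgz
    rw [← Module.End.mul_apply, ← map_mul] at hgz
    have := hu _ hgz
    rw [h] at this
    have h2 := (mul_dvd_mul_iff_right hr.bm.ne_zero).mp this
    by_contra h0
    have h3 := Polynomial.degree_le_of_dvd h2 h0
    rw [degree_eq_natDegree hr.am.ne_zero, hr.an] at h3
    exact absurd hg (not_lt.mpr h3)

end crit

section constr
set_option linter.unusedSectionVars false
variable {K : Type*} [Field K] {V : Type*} [AddCommGroup V] [Module K V] [FiniteDimensional K V]
  {B : LinearMap.BilinForm K V}

theorem isom_inj (hB : IsSympForm B) {X : V →ₗ[K] V} (hX : ∀ x y, B (X x) (X y) = B x y) :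
    Function.Injective X := by
  rw [← LinearMap.ker_eq_bot, LinearMap.ker_eq_bot']
  intro x hx
  apply hB.nd
  intro y
  rw [← hX, hx]
  simp

theorem isom_surj (hB : IsSympForm B) {X : V →ₗ[K] V} (hX : ∀ x y, B (X x) (X y) = B x y) :
    Function.Surjective X :=
  LinearMap.surjective_of_injective (isom_inj hB hX)

theorem isom_pow {X : V →ₗ[K] V} (hX : ∀ x y, B (X x) (X y) = B x y) (k : ℕ) :
    ∀ x y, B ((X ^ k) x) ((X ^ k) y) = B x y := by
  induction k with
  | zero => simp
  | succ k ih => intro x y; rw [pow_succ', Module.End.mul_apply, Module.End.mul_apply, hX, ih]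

theorem key_adj {X : V →ₗ[K] V} (hX : ∀ x y, B (X x) (X y) = B x y) {n : ℕ} {a b : K[X]}
    (hr : Recip n a b) : ∃ c : K, ∀ x z, B (aeval X a x) ((X ^ n) z) = c * B x (aeval X b z) := by
  obtain ⟨c, -, hc⟩ := hr.recip
  refine ⟨c, fun x z => ?_⟩
  have h1 : c * B x (aeval X b z) = B x (aeval X (reflect n a) z) := by
    rw [hc, map_mul, aeval_C, Module.End.mul_apply, Module.algebraMap_end_apply, map_smul,
      smul_eq_mul]
  have h2 : (reflect n a).natDegree < n + 1 := by
    rw [Nat.lt_succ_iff, natDegree_le_iff_coeff_eq_zero]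
    intro k hk
    rw [coeff_reflect, revAt_eq_self_of_lt hk]
    exact coeff_eq_zero_of_natDegree_lt (by have := hr.an; omega)
  rw [h1, aeval_apply_sum X _ (n+1) h2, aeval_apply_sum X a (n+1) (by have := hr.an; omega),
    map_sum, map_sum, LinearMap.sum_apply, ← Finset.sum_range_reflect]
  apply Finset.sum_congr rfl
  intro k hk
  rw [Finset.mem_range] at hk
  have e : n + 1 - 1 - k = n - k := by omega
  rw [e, coeff_reflect, revAt_le (by omega)]
  have : (X ^ n) z = (X ^ (n - k)) ((X ^ k) z) := by
    rw [← Module.End.mul_apply, ← pow_add]; congr 2; omega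
  rw [this]
  simp only [map_smul, LinearMap.smul_apply]
  rw [isom_pow hX]

theorem isCompl_of_lag (hB : IsSympForm B) {L W : Submodule K V} (hL : IsLag B L) (hW : IsLag B W)
    (dis : Disjoint L W) : IsCompl L W := by
  refine ⟨dis, ?_⟩
  rw [codisjoint_iff]
  apply Submodule.eq_top_of_finrank_eq
  have h3 := Submodule.finrank_sup_add_finrank_inf_eq L W
  rw [dis.eq_bot, finrank_bot] at h3
  have h1 := hL.finrank hB
  have h2 := hW.finrank hB
  omega

/-- The data to be produced by the case analysis. -/
def Core (B : LinearMap.BilinForm K V) (M : V →ₗ[K] V) (p q : K[X]) : Prop :=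
  ∃ (L : Submodule K V) (D A : V →ₗ[K] V), IsLag B L ∧ CycOn L D p ∧ CycOn L A q ∧
    (∀ u ∈ L, ∀ w ∈ L, B (A u) (M (D w)) = B (A w) (M (D u))) ∧
    (∀ u ∈ L, M (D u) ∈ L → A u = M (D u))

theorem construct (hB : IsSympForm B) {M : V →ₗ[K] V} (hM : ∀ x y, B (M x) (M y) = B x y) {n : ℕ}
    (hV : Module.finrank K V = 2 * n) {p p' q q' : K[X]} (hp : Recip n p p') (hq : Recip n q q')
    (h : Core B M p q) :
    ∃ Y : V →ₗ[K] V, (∀ x y, B (Y x) (Y y) = B x y) ∧ Crit n Y p p' ∧ Crit n (M * Y) q q' := by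
  obtain ⟨L, D, A, hL, hD, hA, h1, h2⟩ := h
  have hLn : Module.finrank K L = n := by have := hL.finrank hB; omega
  have Dsurj : ∀ x ∈ L, ∃ u ∈ L, D u = x := by
    have : L.map D = L := by
      apply Submodule.eq_of_le_of_finrank_eq
      · rintro _ ⟨x, hx, rfl⟩; exact hD.1 x hx
      · have h3 := LinearMap.finrank_range_add_finrank_ker (D.domRestrict L)
        have h4 : LinearMap.ker (D.domRestrict L) = ⊥ := by
          rw [LinearMap.ker_eq_bot']
          intro x hx
          exact Subtype.ext (hD.inj hp.coeff_zero x x.2 hx)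
        rw [h4, finrank_bot, LinearMap.range_domRestrict] at h3
        omega
    intro x hx
    rw [← this] at hx
    exact hx
  obtain ⟨L', hL', hI, hc⟩ := exists_compl_lag hB hL (I := L.map (M * D - A)) (by
    rintro _ ⟨u, hu, rfl⟩ _ ⟨w, hw, rfl⟩
    simp only [LinearMap.sub_apply, Module.End.mul_apply, map_sub]
    rw [hM, hL.iso _ (hD.1 u hu) _ (hD.1 w hw), hL.iso _ (hA.1 u hu) _ (hA.1 w hw), h1 u hu w hw,
      hB.neg (M (D u))]
    ring) (by
    rintro _ ⟨u, hu, rfl⟩ hl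
    simp only [LinearMap.sub_apply, Module.End.mul_apply] at hl ⊢
    have : M (D u) ∈ L := by simpa using L.add_mem hl (hA.1 u hu)
    rw [h2 u hu this, sub_self])
  have hI' : ∀ u ∈ L, M (D u) - A u ∈ L' := fun u hu => hI ⟨u, hu, rfl⟩
  have hdis : ∀ x ∈ L, x ∈ L' → x = 0 := fun x hx hx' =>
    Submodule.disjoint_def.mp hc.disjoint x hx hx'
  have hdec : ∀ z : V, ∃ a ∈ L, ∃ b ∈ L', a + b = z := by
    intro z
    have : z ∈ L ⊔ L' := by rw [hc.sup_eq_top]; trivial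
    exact Submodule.mem_sup.mp this
  have hL'' : IsLag B (L'.comap M) := by
    refine ⟨fun x hx y hy => by rw [← hM]; exact hL'.iso _ hx _ hy, fun x hx => ?_⟩
    rw [Submodule.mem_comap]
    apply hL'.max
    intro y hy
    obtain ⟨z, rfl⟩ := isom_surj hB hM y
    rw [hM]
    exact hx z hy
  have hc2 : IsCompl L (L'.comap M) := by
    apply isCompl_of_lag hB hL hL''
    rw [Submodule.disjoint_def]
    intro x hx hx'
    obtain ⟨u, hu, rfl⟩ := Dsurj x hx
    have : A u ∈ L' := by simpa using L'.sub_mem hx' (hI' u hu)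
    rw [hA.inj hq.coeff_zero u hu (hdis _ (hA.1 u hu) this), map_zero]
  obtain ⟨Y, hY, hYD, hYL'⟩ := exists_ext hB hL hL' hc hL hL'' hc2 D hD.1 (hD.inj hp.coeff_zero)
  have hX : ∀ x y, B ((M * Y) x) ((M * Y) y) = B x y := by
    intro x y
    rw [Module.End.mul_apply, Module.End.mul_apply, hM, hY]
  refine ⟨Y, hY, ⟨?_, ?_⟩, ⟨?_, ?_⟩⟩
  · -- (p p')(Y) = 0
    have hfD : ∀ f : K[X], ∀ u ∈ L, aeval Y f u = aeval D f u := by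
      intro f
      induction f using Polynomial.induction_on' with
      | add p q hp hq => intro x hx; simp [hp x hx, hq x hx]
      | monomial k a =>
        intro x hx
        simp only [aeval_monomial, Module.End.mul_apply, Module.algebraMap_end_apply]
        congr 1
        have : (Y ^ k) x = (D ^ k) x ∧ (D ^ k) x ∈ L := by
          induction k with
          | zero => simp [hx]
          | succ k ih =>
            rw [pow_succ', pow_succ', Module.End.mul_apply, Module.End.mul_apply, ih.1]
            exact ⟨hYD _ ih.2, hD.1 _ ih.2⟩
        exact this.1
    have hpw : ∀ k, ∀ l ∈ L, ∃ l0 ∈ L, (Y ^ k) l0 = l := by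
      intro k
      induction k with
      | zero => intro l hl; exact ⟨l, hl, by simp⟩
      | succ k ih =>
        intro l hl
        obtain ⟨u, hu, rfl⟩ := Dsurj l hl
        obtain ⟨l0, hl0, h0⟩ := ih u hu
        exact ⟨l0, hl0, by rw [pow_succ', Module.End.mul_apply, h0, hYD u hu]⟩
    obtain ⟨c, hcc⟩ := key_adj hY hp.symm
    ext x
    rw [map_mul, Module.End.mul_apply, LinearMap.zero_apply]
    have : aeval Y p' x ∈ L := by
      apply hL.max
      intro y hy
      obtain ⟨l, hl, rfl⟩ := hpw n y hy
      apply hB.comm0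
      rw [hcc, hfD p l hl, hD.aeval_zero l hl]
      simp
    rw [hfD _ _ this, hD.aeval_zero _ this]
  · have hfD : ∀ f : K[X], ∀ u ∈ L, aeval Y f u = aeval D f u := by
      intro f
      induction f using Polynomial.induction_on' with
      | add p q hp hq => intro x hx; simp [hp x hx, hq x hx]
      | monomial k a =>
        intro x hx
        simp only [aeval_monomial, Module.End.mul_apply, Module.algebraMap_end_apply]
        congr 1
        have : (Y ^ k) x = (D ^ k) x ∧ (D ^ k) x ∈ L := by
          induction k with
          | zero => simp [hx]
          | succ k ih =>
            rw [pow_succ', pow_succ', Module.End.mul_apply, Module.End.mul_apply, ih.1]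
            exact ⟨hYD _ ih.2, hD.1 _ ih.2⟩
        exact this.1
    obtain ⟨_, y, hy, hy0, hyW⟩ := hD
    refine ⟨y, by rw [hfD _ _ hy, hy0], fun f hf hf0 => ?_⟩
    rw [hfD _ _ hy] at hf0
    exact indep_of_cyc hy0 hp.am (by rw [hp.an, hLn]) hyW f (by rw [hLn]; exact hf) hf0
  all_goals
    have hXL' : ∀ x ∈ L', (M * Y) x ∈ L' := fun x hx => hYL' x hx
    have hfA : ∀ f : K[X], ∀ u ∈ L, aeval (M * Y) f u - aeval A f u ∈ L' := by
      intro f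
      induction f using Polynomial.induction_on' with
      | add p q hp hq =>
        intro x hx
        have := L'.add_mem (hp x hx) (hq x hx)
        simp only [map_add, LinearMap.add_apply]
        convert this using 1
        abel
      | monomial k a =>
        intro x hx
        simp only [aeval_monomial, Module.End.mul_apply, Module.algebraMap_end_apply]
        rw [← smul_sub]
        apply L'.smul_mem
        have : ((M * Y) ^ k) x - (A ^ k) x ∈ L' ∧ (A ^ k) x ∈ L := by
          induction k with
          | zero => simp [hx]
          | succ k ih =>
            rw [pow_succ', pow_succ', Module.End.mul_apply, Module.End.mul_apply]
            refine ⟨?_, hA.1 _ ih.2⟩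
            have e1 := hXL' _ ih.1
            have e2 := hI' _ ih.2
            rw [← hYD _ ih.2] at e2
            have := L'.add_mem e1 e2
            rw [map_sub] at this
            convert this using 1
            simp only [Module.End.mul_apply]
            abel
        exact this.1
    have hqL' : ∀ z, aeval (M * Y) q z ∈ L' := by
      intro z
      obtain ⟨a, ha, b, hb, rfl⟩ := hdec z
      rw [map_add]
      apply L'.add_mem _ (aeval_mem hXL' q b hb)
      have := hfA q a ha
      rwa [hA.aeval_zero a ha, sub_zero] at this
    have hq'0 : ∀ z ∈ L', aeval (M * Y) q' z = 0 := by
      intro z hz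
      obtain ⟨c, hcc⟩ := key_adj hX hq.symm
      apply hB.nd
      intro y
      obtain ⟨w, rfl⟩ := isom_surj hB (isom_pow hX n) y
      rw [hcc, hL'.iso z hz _ (hqL' w), mul_zero]
    have hqq : aeval (M * Y) (q * q') = 0 := by
      ext z
      rw [mul_comm, map_mul, Module.End.mul_apply, hq'0 _ (hqL' z), LinearMap.zero_apply]
  · exact hqq
  · obtain ⟨_, y, hy, hy0, hyW⟩ := id hA
    refine ⟨aeval (M * Y) q' y, by rw [← Module.End.mul_apply, ← map_mul, hqq]; rfl,
      fun f hf hf0 => ?_⟩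
    rw [← Module.End.mul_apply, ← map_mul] at hf0
    have e1 := hfA (f * q') y hy
    rw [hf0, zero_sub, neg_mem_iff] at e1
    have e2 := hdis _ (aeval_mem hA.1 _ y hy) e1
    apply indep_of_cyc hy0 hq.am (by rw [hq.an, hLn]) hyW f (by rw [hLn]; exact hf)
    obtain ⟨u, v, huv⟩ := hq.cop
    have e3 : f = (f * u) * q + v * (f * q') := by linear_combination (-f) * huv
    rw [e3]
    simp only [map_add, LinearMap.add_apply]
    rw [map_mul (aeval A) (f * u), map_mul (aeval A) v, Module.End.mul_apply, Module.End.mul_apply,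
      hy0, e2]
    simp

theorem crit_lag (hB : IsSympForm B) {X : V →ₗ[K] V} (hX : ∀ x y, B (X x) (X y) = B x y) {n : ℕ}
    {a b : K[X]} (hr : Recip n a b) (h : aeval X (a * b) = 0) :
    IsLag B (LinearMap.ker (aeval X a)) ∧ IsLag B (LinearMap.ker (aeval X b)) ∧
      IsCompl (LinearMap.ker (aeval X a)) (LinearMap.ker (aeval X b)) := by
  have iso : ∀ {a b : K[X]}, Recip n a b → ∀ x ∈ LinearMap.ker (aeval X a),
      ∀ y ∈ LinearMap.ker (aeval X a), B x y = 0 := by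
    intro a b hr x hx y hy
    obtain ⟨c, hc⟩ := key_adj hX hr.symm
    obtain ⟨u, v, huv⟩ := hr.cop
    rw [LinearMap.mem_ker] at hx hy
    have e : x = aeval X b (aeval X v x) := by
      have := congrArg (fun f => aeval X f x) huv
      simp only [map_add, map_mul, map_one, LinearMap.add_apply, Module.End.mul_apply, hx, map_zero,
        zero_add, Module.End.one_apply] at this
      rw [← Module.End.mul_apply, ← map_mul, mul_comm, map_mul, Module.End.mul_apply]
      exact this.symm
    obtain ⟨z, rfl⟩ := isom_surj hB (isom_pow hX n) y
    rw [e, hc]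
    have : aeval X a z = 0 := by
      apply isom_inj hB (isom_pow hX n)
      rw [map_zero, ← hy]
      have := Commute.map (Commute.all ((Polynomial.X : K[X]) ^ n) a) (aeval X)
      simp only [map_pow, aeval_X] at this
      exact LinearMap.congr_fun this.eq z
    rw [this, map_zero, mul_zero]
  have hc : IsCompl (LinearMap.ker (aeval X a)) (LinearMap.ker (aeval X b)) := by
    refine ⟨disjoint_ker_aeval_of_isCoprime X hr.cop, ?_⟩
    rw [codisjoint_iff, sup_ker_aeval_eq_ker_aeval_mul_of_coprime X hr.cop, h, LinearMap.ker_zero]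
  have lag : ∀ {U W : Submodule K V}, IsCompl U W → (∀ x ∈ U, ∀ y ∈ U, B x y = 0) →
      (∀ x ∈ W, ∀ y ∈ W, B x y = 0) → IsLag B U := by
    intro U W hc hU hW
    refine ⟨hU, fun x hx => ?_⟩
    have hm : ∀ z : V, ∃ a ∈ U, ∃ b ∈ W, a + b = z := by
      intro z
      have : z ∈ U ⊔ W := by rw [hc.sup_eq_top]; trivial
      exact Submodule.mem_sup.mp this
    obtain ⟨u, hu, w, hw, rfl⟩ := hm x
    have : w = 0 := by
      apply hB.nd
      intro z
      obtain ⟨u', hu', w', hw', rfl⟩ := hm z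
      have := hx u' hu'
      rw [map_add, hU u' hu' u hu, zero_add] at this
      rw [map_add, hW w hw w' hw', hB.comm0 this, add_zero]
    rw [this, add_zero]
    exact hu
  exact ⟨lag hc (iso hr) (iso hr.symm), lag hc.symm (iso hr.symm) (iso hr), hc⟩

theorem crit_conj (hB : IsSympForm B) {n : ℕ} (hV : Module.finrank K V = 2 * n) {X X' : V →ₗ[K] V}
    (hX : ∀ x y, B (X x) (X y) = B x y) (hX' : ∀ x y, B (X' x) (X' y) = B x y)
    {a b : K[X]} (hr : Recip n a b) (h : Crit n X a b) (h' : Crit n X' a b) :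
    ∃ S : V →ₗ[K] V, (∀ x y, B (S x) (S y) = B x y) ∧ S * X = X' * S := by
  obtain ⟨hL, hW, hc⟩ := crit_lag hB hX hr h.1
  obtain ⟨hL2, hW2, hc2⟩ := crit_lag hB hX' hr h'.1
  obtain ⟨-, v, hv, hvf⟩ := h
  obtain ⟨-, v', hv', hvf'⟩ := h'
  let F : (V →ₗ[K] V) → V → degreeLT K n →ₗ[K] V := fun X v =>
    ((LinearMap.applyₗ v).comp (aeval X).toLinearMap : K[X] →ₗ[K] V).comp (degreeLT K n).subtype
  have hF : ∀ X v (g : degreeLT K n), F X v g = aeval X (g : K[X]) v := fun _ _ g => rfl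
  have hker : LinearMap.ker (F X v) = ⊥ := by
    rw [LinearMap.ker_eq_bot']
    intro g hg
    exact Subtype.ext (hvf _ (mem_degreeLT.mp g.2) hg)
  obtain ⟨r, hrr⟩ := LinearMap.exists_leftInverse_of_injective (F X v) hker
  have hrange : LinearMap.range (F X v) = LinearMap.ker (aeval X a) := by
    have : FiniteDimensional K (degreeLT K n) := (degreeLTEquiv K n).symm.finiteDimensional
    apply Submodule.eq_of_le_of_finrank_eq
    · rintro _ ⟨g, rfl⟩
      rw [LinearMap.mem_ker, hF, ← Module.End.mul_apply, ← map_mul, mul_comm, map_mul,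
        Module.End.mul_apply, hv, map_zero]
    · have h2 := LinearMap.finrank_range_add_finrank_ker (F X v)
      have h3 : Module.finrank K (degreeLT K n) = n := by
        rw [(degreeLTEquiv K n).finrank_eq]; simp
      rw [hker, finrank_bot] at h2
      have := hL.finrank hB
      omega
  let g : V →ₗ[K] V := (F X' v').comp r
  have hg : ∀ f : K[X], f.degree < n → g (aeval X f v) = aeval X' f v' := by
    intro f hf
    have := LinearMap.congr_fun hrr ⟨f, mem_degreeLT.mpr hf⟩
    simp only [LinearMap.comp_apply, LinearMap.id_apply] at this
    rw [hF] at this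
    simp only [g, LinearMap.comp_apply]
    rw [this, hF]
  have hrep : ∀ x ∈ LinearMap.ker (aeval X a), ∃ f : K[X], f.degree < n ∧ aeval X f v = x := by
    intro x hx
    rw [← hrange] at hx
    obtain ⟨f, rfl⟩ := hx
    exact ⟨f, mem_degreeLT.mp f.2, rfl⟩
  have hdeg : ∀ f : K[X], (f %ₘ a).degree < n := by
    intro f
    have := degree_modByMonic_lt f hr.am
    rwa [degree_eq_natDegree hr.am.ne_zero, hr.an] at this
  have hmod : ∀ (X : V →ₗ[K] V) (v : V), aeval X a v = 0 → ∀ f : K[X],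
      aeval X f v = aeval X (f %ₘ a) v := by
    intro X v hv f
    conv_lhs => rw [← modByMonic_add_div f a]
    simp [mul_comm a, hv]
  have hg' : ∀ f : K[X], g (aeval X f v) = aeval X' f v' := by
    intro f
    rw [hmod X v hv f, hg _ (hdeg f), ← hmod X' v' hv' f]
  obtain ⟨S, hS, hSg, hSW⟩ := exists_ext hB hL hW hc hL2 hW2 hc2 g (by
    intro x hx
    obtain ⟨f, hf, rfl⟩ := hrep x hx
    rw [hg', LinearMap.mem_ker, ← Module.End.mul_apply, ← map_mul, mul_comm, map_mul,
        Module.End.mul_apply, hv', map_zero]) (by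
    intro x hx h0
    obtain ⟨f, hf, rfl⟩ := hrep x hx
    rw [hg'] at h0
    rw [hvf' f hf h0]
    simp)
  have inv : ∀ (X : V →ₗ[K] V) (b : K[X]), ∀ x ∈ LinearMap.ker (aeval X b),
      X x ∈ LinearMap.ker (aeval X b) := by
    intro X b x hx
    rw [LinearMap.mem_ker] at hx ⊢
    rw [← comm_aeval, hx, map_zero]
  have hU : ∀ x ∈ LinearMap.ker (aeval X a), S (X x) = X' (S x) := by
    intro x hx
    rw [hSg _ (inv X a x hx), hSg x hx]
    obtain ⟨f, hf, rfl⟩ := hrep x hx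
    have e : ∀ (X : V →ₗ[K] V) v, X (aeval X f v) = aeval X (Polynomial.X * f) v := by
      intro X v; simp
    rw [e, hg', hg', e]
  have hdec : ∀ z : V, ∃ u ∈ LinearMap.ker (aeval X a), ∃ w ∈ LinearMap.ker (aeval X b),
      u + w = z := by
    intro z
    have : z ∈ LinearMap.ker (aeval X a) ⊔ LinearMap.ker (aeval X b) := by
      rw [hc.sup_eq_top]; trivial
    exact Submodule.mem_sup.mp this
  have hWW : ∀ w ∈ LinearMap.ker (aeval X b), S (X w) = X' (S w) := by
    intro w hw
    rw [← sub_eq_zero]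
    apply hB.nd
    intro z
    obtain ⟨z, rfl⟩ := isom_surj hB hS z
    obtain ⟨z, rfl⟩ := isom_surj hB hX z
    obtain ⟨u, hu, w', hw', rfl⟩ := hdec z
    have m1 : S (X w) - X' (S w) ∈ LinearMap.ker (aeval X' b) :=
      Submodule.sub_mem _ (hSW _ (inv X b w hw)) (inv X' b _ (hSW w hw))
    rw [map_add, map_add, map_add, hW2.iso _ m1 _ (hSW _ (inv X b w' hw')), add_zero, map_sub,
      LinearMap.sub_apply, hS, hX, hU u hu, hX', hS, sub_self]
  refine ⟨S, hS, ?_⟩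
  ext z
  obtain ⟨u, hu, w, hw, rfl⟩ := hdec z
  simp only [Module.End.mul_apply, map_add, hU u hu, hWW w hw]

end constr

section caseone
set_option linter.unusedSectionVars false
variable {K : Type*} [Field K] {V : Type*} [AddCommGroup V] [Module K V] [FiniteDimensional K V]
  {B : LinearMap.BilinForm K V}

theorem finrank_sup_span {H : Submodule K V} {v : V} (φ : V →ₗ[K] K) (h0 : ∀ x ∈ H, φ x = 0)
    (hv : φ v ≠ 0) :
    Module.finrank K (H ⊔ Submodule.span K {v} : Submodule K V) = Module.finrank K H + 1 := by
  have h1 := hyper_finrank (H ⊔ Submodule.span K {v}) φ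
    (Submodule.mem_sup_right (Submodule.mem_span_singleton_self v)) hv
  have : (H ⊔ Submodule.span K {v} : Submodule K V) ⊓ LinearMap.ker φ = H := by
    apply le_antisymm
    · rintro x ⟨hx, hx0⟩
      obtain ⟨a, ha, b, hb, rfl⟩ := Submodule.mem_sup.mp hx
      obtain ⟨c, rfl⟩ := Submodule.mem_span_singleton.mp hb
      have h2 : φ (a + c • v) = 0 := hx0
      rw [map_add, h0 a ha, map_smul, zero_add, smul_eq_mul] at h2
      rw [(mul_eq_zero.mp h2).resolve_right hv, zero_smul, add_zero]
      exact ha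
    · exact fun x hx => ⟨Submodule.mem_sup_left hx, h0 x hx⟩
  rw [this] at h1
  exact h1.symm

theorem exists_fill (m : ℕ) : ∀ H U : Submodule K V, H ≤ U →
    Module.finrank K U = Module.finrank K H + m →
    ∃ ε : ℕ → V, (∀ j < m, ε j ∈ U) ∧ ∀ W : Submodule K V, H ≤ W → (∀ j < m, ε j ∈ W) → U ≤ W := by
  induction m with
  | zero =>
    intro H U hle hd
    have := Submodule.eq_of_le_of_finrank_eq hle hd.symm
    exact ⟨fun _ => 0, fun j hj => by omega, fun W hW _ => this ▸ hW⟩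
  | succ m ih =>
    intro H U hle hd
    obtain ⟨z, hz, hzH⟩ := exists_mem_notMem_of_finrank (X := H) (Y := U) (by omega)
    obtain ⟨φ, h1, h0⟩ := exists_dual_ne hzH
    have hf := finrank_sup_span φ h0 (v := z) (by rw [h1]; exact one_ne_zero)
    obtain ⟨ε, hε, hW⟩ := ih (H ⊔ Submodule.span K {z}) U
      (sup_le hle ((Submodule.span_singleton_le_iff_mem _ _).mpr hz)) (by omega)
    refine ⟨fun i => Nat.casesOn (motive := fun _ => V) i z ε, ?_, ?_⟩
    · intro j hj
      cases j with
      | zero => exact hz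
      | succ j => exact hε j (by omega)
    · intro W h1 h2
      refine hW W (sup_le h1 ((Submodule.span_singleton_le_iff_mem _ _).mpr (h2 0 (by omega))))
        fun j hj => h2 (j+1) (by omega)

theorem chain_setup {M : V →ₗ[K] V} (hM : Function.Injective M) {h : ℕ} (hh : 1 ≤ h)
    {H L2 : Submodule K V} (hHL : H ≤ L2) (hMH : ∀ x ∈ H, M x ∈ H) (hH : Module.finrank K H = h)
    (hL2 : Module.finrank K L2 = h + 1) :
    ∃ (C : V →ₗ[K] V) (t s : ℕ → V) (ρ κ : K) (h0 : V), GenBy t 0 h L2 ∧ GenBy t 1 h H ∧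
      GenBy s 0 h L2 ∧ (∀ i, 1 ≤ i → i ≤ h → s i ∈ H) ∧ ρ ≠ 0 ∧ h0 ∈ H ∧ s h = ρ • t h + C h0 ∧
      s 0 - κ • t 0 ∈ H ∧ (∀ x ∈ H, C x ∈ L2) ∧ (∀ i < h, C (t (i+1)) = t i) ∧
      (∀ D : V →ₗ[K] V, (∀ i < h, D (t i) = t (i+1)) → ∀ x ∈ H, D (C x) = x) ∧
      (∀ A : V →ₗ[K] V, (∀ i < h, A (s i) = s (i+1)) → ∀ x ∈ H, A (C x) = M x) := by
  obtain ⟨C, t, s, y, gt0, gt1, gs, gy, ct, cy, my⟩ :=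
    chain_lemma M hM h H L2 hHL (fun x hx => hHL (hMH x hx)) hH hL2
  have hCL : ∀ x ∈ H, C x ∈ L2 := by
    have : H ≤ L2.comap C := by
      apply gt1.2
      intro i h1 h2
      obtain ⟨j, rfl⟩ : ∃ j, i = j + 1 := ⟨i - 1, by omega⟩
      rw [Submodule.mem_comap, ct j (by omega)]
      exact gt0.1 j (by omega) (by omega)
    exact this
  have e1 : L2 ≤ H.map C ⊔ Submodule.span K {t h} := by
    apply gt0.2
    intro i _ hi
    rcases Nat.lt_or_ge i h with hlt | hge
    · exact Submodule.mem_sup_left ⟨t (i+1), gt1.1 _ (by omega) (by omega), ct i hlt⟩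
    · have : i = h := by omega
      subst this
      exact Submodule.mem_sup_right (Submodule.mem_span_singleton_self _)
  have e2 : L2 ≤ H ⊔ Submodule.span K {t 0} := by
    apply gt0.2
    intro i _ hi
    rcases Nat.eq_zero_or_pos i with h0 | h0
    · subst h0
      exact Submodule.mem_sup_right (Submodule.mem_span_singleton_self _)
    · exact Submodule.mem_sup_left (gt1.1 i h0 hi)
  obtain ⟨_, ⟨h0, hh0, rfl⟩, _, hb, hsh⟩ := Submodule.mem_sup.mp (e1 (gs.1 h (by omega) le_rfl))
  obtain ⟨ρ, rfl⟩ := Submodule.mem_span_singleton.mp hb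
  obtain ⟨a, ha, _, hb, hs0⟩ := Submodule.mem_sup.mp (e2 (gs.1 0 (by omega) (by omega)))
  obtain ⟨κ, rfl⟩ := Submodule.mem_span_singleton.mp hb
  refine ⟨C, t, s, ρ, κ, h0, gt0, gt1, gs, ?_, ?_, hh0, by rw [← hsh, add_comm], ?_, hCL, ct, ?_, ?_⟩
  · intro i h1 h2
    obtain ⟨j, rfl⟩ : ∃ j, i = j + 1 := ⟨i - 1, by omega⟩
    rw [← my j (by omega)]
    exact hMH _ (gy.1 _ (by omega) h2)
  · rintro rfl
    have : L2 ≤ H.map C := by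
      apply gs.2
      intro i _ hi
      rcases Nat.lt_or_ge i h with hlt | hge
      · exact ⟨y (i+1), gy.1 _ (by omega) (by omega), cy i hlt⟩
      · have : i = h := by omega
        subst this
        rw [zero_smul, add_zero] at hsh
        exact ⟨h0, hh0, hsh⟩
    have h1 := Submodule.finrank_mono this
    have h2 := Submodule.finrank_map_le C H
    omega
  · rw [← hs0, add_sub_cancel_right]; exact ha
  · intro D hD
    have : H ≤ LinearMap.eqLocus (D * C) 1 := by
      apply gt1.2
      intro i h1 h2
      obtain ⟨j, rfl⟩ : ∃ j, i = j + 1 := ⟨i - 1, by omega⟩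
      rw [LinearMap.mem_eqLocus, Module.End.mul_apply, ct j (by omega), hD j (by omega)]
      rfl
    intro x hx
    exact this hx
  · intro A hA
    have : H ≤ LinearMap.eqLocus (A * C) M := by
      apply gy.2
      intro i h1 h2
      obtain ⟨j, rfl⟩ : ∃ j, i = j + 1 := ⟨i - 1, by omega⟩
      rw [LinearMap.mem_eqLocus, Module.End.mul_apply, cy j (by omega), hA j (by omega),
        my j (by omega)]
    intro x hx
    exact this hx

theorem sym_of_gen {M D A : V →ₗ[K] V} {L : Submodule K V} {n : ℕ} {e : ℕ → V}
    (hL : ∀ W : Submodule K V, (∀ i < n, e i ∈ W) → L ≤ W)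
    (h : ∀ i < n, ∀ j < n, B (A (e i)) (M (D (e j))) = B (A (e j)) (M (D (e i)))) :
    ∀ u ∈ L, ∀ w ∈ L, B (A u) (M (D w)) = B (A w) (M (D u)) := by
  let G0 : V →ₗ[K] V →ₗ[K] K := LinearMap.compl₁₂ B A (M * D)
  let G := G0 - G0.flip
  have hG : ∀ u w, G u w = B (A u) (M (D w)) - B (A w) (M (D u)) := fun u w => rfl
  have h1 : ∀ i < n, L ≤ LinearMap.ker (G (e i)) := by
    intro i hi
    apply hL
    intro j hj
    rw [LinearMap.mem_ker, hG, h i hi j hj, sub_self]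
  have h2 : ∀ w ∈ L, L ≤ LinearMap.ker (G.flip w) := by
    intro w hw
    apply hL
    intro i hi
    rw [LinearMap.mem_ker, LinearMap.flip_apply]
    exact h1 i hi hw
  intro u hu w hw
  have := h2 w hw hu
  rw [LinearMap.mem_ker, LinearMap.flip_apply, hG, sub_eq_zero] at this
  exact this

theorem core_I_pos {M : V →ₗ[K] V} (hM : Function.Injective M) {n h : ℕ} (hh : 1 ≤ h)
    {L H : Submodule K V} (hL : IsLag B L) (hLn : Module.finrank K L = n)
    (hHL : H ≤ L) (hH : Module.finrank K H = h)
    (hMH : ∀ x ∈ H, M x ∈ H) (hmem : ∀ x ∈ L, M x ∈ L → x ∈ H)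
    (sym : ∀ x ∈ L, ∀ y ∈ L, B x (M y) = B y (M x))
    {v : V} (hv : v ∈ L) (hvv : B v (M v) ≠ 0) {p q : K[X]}
    (hp : p.Monic) (hq : q.Monic) (hpn : p.natDegree = n) (hqn : q.natDegree = n)
    (hp0 : p.coeff 0 ≠ 0) : Core B M p q := by
  have bH1 : ∀ x ∈ L, ∀ y ∈ H, B x (M y) = 0 := fun x hx y hy => hL.iso x hx _ (hHL (hMH y hy))
  have bH2 : ∀ x ∈ L, ∀ y ∈ H, B y (M x) = 0 := fun x hx y hy => by
    rw [sym y (hHL hy) x hx]; exact bH1 x hx y hy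
  let φ : V →ₗ[K] K := (B v).comp M
  have hφ : ∀ x, φ x = B v (M x) := fun x => rfl
  have hφH : ∀ x ∈ H, φ x = 0 := fun x hx => bH1 v hv x hx
  have hφv : φ v ≠ 0 := hvv
  let L2 := H ⊔ Submodule.span K {v}
  have hvL2 : v ∈ L2 := Submodule.mem_sup_right (Submodule.mem_span_singleton_self v)
  have hL2L : L2 ≤ L := sup_le hHL ((Submodule.span_singleton_le_iff_mem _ _).mpr hv)
  have hL2d : Module.finrank K L2 = h + 1 := by rw [← hH]; exact finrank_sup_span φ hφH hφv
  obtain ⟨C, t, s, ρ, κ, h0, gt0, gt1, gs, hsH, hρ, hh0, hsh, hs0, hCL, ct, hDC, hAC⟩ :=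
    chain_setup hM hh (le_sup_left : H ≤ L2) hMH hH hL2d
  have hd2 := Submodule.finrank_mono hL2L
  have hUd := hyper_finrank L φ hv hφv
  obtain ⟨ε, hεU, hεW⟩ := exists_fill (n - h - 1) H (L ⊓ LinearMap.ker φ)
    (fun x hx => ⟨hHL hx, hφH x hx⟩) (by omega)
  have hLW : ∀ W : Submodule K V, L2 ≤ W → (∀ j < n - h - 1, ε j ∈ W) → L ≤ W := by
    intro W h1 h2 w hw
    have h3 := hεW W (le_sup_left.trans h1) h2
    have : w - (φ w / φ v) • v ∈ L ⊓ LinearMap.ker φ :=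
      ⟨L.sub_mem hw (L.smul_mem _ hv), by simp [hφv]⟩
    have := W.add_mem (h3 this) (W.smul_mem (φ w / φ v) (h1 hvL2))
    simpa using this
  let e : ℕ → V := fun i => if i ≤ h then t i else ε (i - h - 1)
  let e' : ℕ → V := fun i => if i ≤ h then s i else ρ • ε (i - h - 1)
  have et : ∀ i ≤ h, e i = t i := fun i hi => if_pos hi
  have eε : ∀ i, h < i → e i = ε (i - h - 1) := fun i hi => if_neg (by omega)
  have es : ∀ i ≤ h, e' i = s i := fun i hi => if_pos hi
  have es' : ∀ i, h < i → e' i = ρ • e i := fun i hi => by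
    rw [eε i hi]; exact if_neg (by omega)
  have heL : ∀ i < n, e i ∈ L := by
    intro i hi
    rcases Nat.lt_or_ge h i with hlt | hge
    · rw [eε i hlt]; exact (hεU _ (by omega)).1
    · rw [et i hge]; exact hL2L (gt0.1 i (by omega) hge)
  have heL' : ∀ i < n, e' i ∈ L := by
    intro i hi
    rcases Nat.lt_or_ge h i with hlt | hge
    · rw [es' i hlt]; exact L.smul_mem _ (heL i hi)
    · rw [es i hge]; exact hL2L (gs.1 i (by omega) hge)
  have heW : ∀ W : Submodule K V, (∀ i < n, e i ∈ W) → L ≤ W := by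
    intro W hW
    apply hLW W
    · apply gt0.2
      intro i _ hi
      rw [← et i hi]
      exact hW i (by omega)
    · intro j hj
      have := hW (h + 1 + j) (by omega)
      rw [eε _ (by omega)] at this
      convert this using 2
      omega
  have heW' : ∀ W : Submodule K V, (∀ i < n, e' i ∈ W) → L ≤ W := by
    intro W hW
    apply hLW W
    · apply gs.2
      intro i _ hi
      rw [← es i hi]
      exact hW i (by omega)
    · intro j hj
      have := hW (h + 1 + j) (by omega)
      rw [es' _ (by omega), eε _ (by omega)] at this
      rw [W.smul_mem_iff hρ] at this
      convert this using 2
      omega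
  have hhn : h < n := by omega
  obtain ⟨D, hD, hD1, hD2, hD3⟩ := hook n h hhn e (indep_of_gen hLn heL heW) p hp hpn L heL heW
  obtain ⟨A, hA, hA1, hA2, hA3⟩ :=
    hook n h hhn e' (indep_of_gen hLn heL' heW') q hq hqn L heL' heW'
  have hDC' := hDC D (fun i hi => by
    rw [← et i hi.le, ← et (i+1) hi]; exact hD1 i hi)
  have hAC' := hAC A (fun i hi => by
    rw [← es i hi.le, ← es (i+1) hi]; exact hA1 i hi)
  have htH : ∀ i, 1 ≤ i → i ≤ h → e i ∈ H := fun i h1 h2 => by rw [et i h2]; exact gt1.1 i h1 h2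
  have hsH' : ∀ i, 1 ≤ i → i ≤ h → e' i ∈ H := fun i h1 h2 => by rw [es i h2]; exact hsH i h1 h2
  have hb0 : ∀ i < n, h < i → B (e 0) (M (e i)) = 0 := by
    intro i hi hhi
    have h1 : φ (e i) = 0 := by rw [eε i hhi]; exact (hεU _ (by omega)).2
    have h2 : e 0 ∈ L2 := by rw [et 0 (by omega)]; exact gt0.1 0 le_rfl (by omega)
    obtain ⟨a, ha, b, hb, hab⟩ := Submodule.mem_sup.mp h2
    obtain ⟨c, rfl⟩ := Submodule.mem_span_singleton.mp hb
    rw [← hab, map_add, LinearMap.add_apply, bH2 _ (heL i hi) a ha, map_smul, LinearMap.smul_apply,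
      ← hφ, h1]
    simp
  -- action of `D`, `A` modulo `H`
  have sumH : ∀ (f : ℕ → V) (r : K[X]), (∀ i, 1 ≤ i → i ≤ h → f i ∈ H) →
      (- ∑ i ∈ Finset.range (h+1), r.coeff i • f i) - (- r.coeff 0) • f 0 ∈ H := by
    intro f r hf
    rw [Finset.sum_range_succ']
    have : -(∑ k ∈ Finset.range h, r.coeff (k + 1) • f (k + 1) + r.coeff 0 • f 0) -
        (- r.coeff 0) • f 0 = - ∑ k ∈ Finset.range h, r.coeff (k + 1) • f (k + 1) := by
      rw [neg_smul]; abel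
    rw [this]
    apply H.neg_mem
    apply H.sum_mem
    intro k hk
    rw [Finset.mem_range] at hk
    exact H.smul_mem _ (hf _ (by omega) (by omega))
  have Dmod : ∀ i, h ≤ i → i + 1 < n → D (e i) - e (i+1) ∈ H := by
    intro i h1 h2
    rw [hD2 i h1 h2, sub_sub_cancel_left]
    exact H.neg_mem (H.smul_mem _ (htH h hh le_rfl))
  have Dend : D (e (n-1)) - (- p.coeff 0) • e 0 ∈ H := by
    rw [hD3]; exact sumH e p htH
  have Amod' : ∀ i, h ≤ i → i + 1 < n → A (e' i) - e' (i+1) ∈ H := by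
    intro i h1 h2
    rw [hA2 i h1 h2, sub_sub_cancel_left]
    exact H.neg_mem (H.smul_mem _ (hsH' h hh le_rfl))
  have Aend' : A (e' (n-1)) - (- q.coeff 0) • e' 0 ∈ H := by
    rw [hA3]; exact sumH e' q hsH'
  have Ae : ∀ i, h ≤ i → i < n → A (e i) - ρ⁻¹ • A (e' i) ∈ H := by
    intro i h1 h2
    rcases Nat.lt_or_ge h i with hlt | hge
    · rw [es' i hlt, map_smul, smul_smul, inv_mul_cancel₀ hρ, one_smul, sub_self]
      exact H.zero_mem
    · have : i = h := by omega
      subst this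
      rw [et i le_rfl, es i le_rfl, hsh, map_add, map_smul, hAC' h0 hh0, smul_add, smul_smul,
        inv_mul_cancel₀ hρ, one_smul, sub_add_cancel_left]
      exact H.neg_mem (H.smul_mem _ (hMH _ hh0))
  have Amod : ∀ i, h ≤ i → i + 1 < n → A (e i) - e (i+1) ∈ H := by
    intro i h1 h2
    have a1 := Ae i h1 (by omega)
    have a2 := H.smul_mem ρ⁻¹ (Amod' i h1 h2)
    rw [es' (i+1) (by omega), smul_sub, smul_smul, inv_mul_cancel₀ hρ, one_smul] at a2
    simpa using H.add_mem a1 a2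
  have Aend : A (e (n-1)) - (ρ⁻¹ * (- q.coeff 0) * κ) • e 0 ∈ H := by
    have a1 := Ae (n-1) (by omega) (by omega)
    have a2 := H.smul_mem ρ⁻¹ Aend'
    have a3 := H.smul_mem (ρ⁻¹ * (- q.coeff 0)) hs0
    rw [← es 0 (by omega), ← et 0 (by omega)] at a3
    have := H.add_mem (H.add_mem a1 a2) a3
    convert this using 1
    module
  have bcongr : ∀ x ∈ L, ∀ x' ∈ L, ∀ y ∈ L, ∀ y' ∈ L, x - x' ∈ H → y - y' ∈ H →
      B x (M y) = B x' (M y') := by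
    intro x hx x' hx' y hy y' hy' h1 h2
    have a1 := bH2 y hy _ h1
    have a2 := bH1 x' hx' _ h2
    rw [map_sub, LinearMap.sub_apply, sub_eq_zero] at a1
    rw [map_sub, map_sub, sub_eq_zero] at a2
    rw [a1, a2]
  have AmemL : ∀ i < n, A (e i) ∈ L := fun i hi => hA.1 _ (heL i hi)
  have DmemL : ∀ i < n, D (e i) ∈ L := fun i hi => hD.1 _ (heL i hi)
  have low : ∀ i < h, D (e i) ∈ H ∧ A (e i) ∈ H := by
    intro i hi
    refine ⟨by rw [hD1 i hi]; exact htH _ (by omega) (by omega), ?_⟩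
    rw [et i hi.le, ← ct i hi, hAC' _ (gt1.1 _ (by omega) (by omega))]
    exact hMH _ (gt1.1 _ (by omega) (by omega))
  have he0 : e 0 ∈ L := heL 0 (by omega)
  refine ⟨L, D, A, hL, hD, hA, sym_of_gen heW ?_, ?_⟩
  · intro i hi j hj
    rcases Nat.lt_or_ge i h with hih | hih
    · rw [bH2 _ (DmemL j hj) _ (low i hih).2, bH1 _ (AmemL j hj) _ (low i hih).1]
    rcases Nat.lt_or_ge j h with hjh | hjh
    · rw [bH2 _ (DmemL i hi) _ (low j hjh).2, bH1 _ (AmemL i hi) _ (low j hjh).1]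
    have mixed : ∀ i < n, h ≤ i → i + 1 < n →
        B (A (e i)) (M (D (e (n-1)))) = B (A (e (n-1))) (M (D (e i))) := by
      intro i hi hih hi1
      rw [bcongr _ (AmemL i hi) _ (heL (i+1) hi1) _ (DmemL (n-1) (by omega)) _ (L.smul_mem _ he0)
        (Amod i hih hi1) Dend, bcongr _ (AmemL (n-1) (by omega)) _ (L.smul_mem _ he0) _
        (DmemL i hi) _ (heL (i+1) hi1) Aend (Dmod i hih hi1)]
      have z1 := hb0 (i+1) hi1 (by omega)
      have z2 : B (e (i+1)) (M (e 0)) = 0 := by rw [sym _ (heL _ hi1) _ he0]; exact z1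
      simp [z1, z2]
    rcases Nat.lt_or_ge (i+1) n with hi1 | hi1
    · rcases Nat.lt_or_ge (j+1) n with hj1 | hj1
      · rw [bcongr _ (AmemL i hi) _ (heL (i+1) hi1) _ (DmemL j hj) _ (heL (j+1) hj1)
          (Amod i hih hi1) (Dmod j hjh hj1), bcongr _ (AmemL j hj) _ (heL (j+1) hj1) _ (DmemL i hi)
          _ (heL (i+1) hi1) (Amod j hjh hj1) (Dmod i hih hi1)]
        exact sym _ (heL _ hi1) _ (heL _ hj1)
      · have : j = n - 1 := by omega
        subst this
        exact mixed i hi hih hi1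
    · have : i = n - 1 := by omega
      subst this
      rcases Nat.lt_or_ge (j+1) n with hj1 | hj1
      · exact (mixed j hj hjh hj1).symm
      · have : j = n - 1 := by omega
        subst this
        rfl
  · intro u hu hMD
    have hDu : D u ∈ H := hmem _ (hD.1 u hu) hMD
    have : C (D u) = u := hD.inj' hp0 _ (hL2L (hCL _ hDu)) _ hu (hDC' _ hDu)
    conv_lhs => rw [← this]
    exact hAC' _ hDu

end caseone

section casetwo
set_option linter.unusedSectionVars false
variable {K : Type*} [Field K] {V : Type*} [AddCommGroup V] [Module K V] [FiniteDimensional K V]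
  {B : LinearMap.BilinForm K V}

theorem exists_not_eigen {M : V →ₗ[K] V} (hns : ∀ c : K, M ≠ c • (1 : V →ₗ[K] V)) :
    ∃ w, M w ∉ Submodule.span K {w} := by
  by_contra hc
  push Not at hc
  have : ∀ w, ∃ c : K, M w = c • w := fun w => by
    obtain ⟨c, hc⟩ := Submodule.mem_span_singleton.mp (hc w)
    exact ⟨c, hc.symm⟩
  choose c hc using this
  by_cases h0 : ∃ v : V, v ≠ 0
  · obtain ⟨v, hv⟩ := h0
    apply hns (c v)
    ext x
    rw [LinearMap.smul_apply, Module.End.one_apply]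
    by_cases hx : x ∈ Submodule.span K {v}
    · obtain ⟨a, rfl⟩ := Submodule.mem_span_singleton.mp hx
      rw [map_smul, hc v, smul_comm]
    · obtain ⟨φ, h1, h2⟩ := exists_dual_ne hx
      have hv0 := h2 v (Submodule.mem_span_singleton_self v)
      have e : c (x + v) • (x + v) = c x • x + c v • v := by
        rw [← hc, ← hc, ← hc, map_add]
      have e1 := congrArg φ e
      simp [h1, hv0] at e1
      rw [e1] at e
      have e2 : (c x - c v) • v = 0 := by
        rw [smul_add] at e
        rw [sub_smul, sub_eq_zero]
        exact add_left_cancel e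
      have := (smul_eq_zero.mp e2).resolve_right hv
      rw [hc x, sub_eq_zero.mp this]
  · push Not at h0
    apply hns 0
    ext x
    rw [h0 (M x)]; simp

theorem core_II (hB : IsSympForm B) {M : V →ₗ[K] V} (hMi : ∀ x y, B (M x) (M y) = B x y)
    (hM0 : ∀ x, B x (M x) = 0) (hns : ∀ c : K, M ≠ c • (1 : V →ₗ[K] V)) {n : ℕ} (hn : 3 ≤ n)
    (hV : Module.finrank K V = 2 * n) {p q : K[X]}
    (hp : p.Monic) (hq : q.Monic) (hpn : p.natDegree = n) (hqn : q.natDegree = n)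
    (hp0 : p.coeff 0 ≠ 0) : Core B M p q := by
  have hM : Function.Injective M := isom_inj hB hMi
  have alt : ∀ x y, B x (M y) = - B y (M x) := by
    intro x y
    have := hM0 (x + y)
    simp [hM0] at this
    exact eq_neg_of_add_eq_zero_left this
  have adj : ∀ x y, B (M x) y = B x (M y) := by
    intro x y; rw [hB.neg, alt x y]
  obtain ⟨w, hw⟩ := exists_not_eigen hns
  obtain ⟨w', hw1, hw2⟩ : ∃ w', B w w' = 0 ∧ B (M w) w' ≠ 0 := by
    by_contra hc
    push Not at hc
    apply hw
    have : M w ∈ B.orthogonal (B.orthogonal (Submodule.span K {w})) := by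
      intro y hy
      exact hB.comm0 (hc y (hy w (Submodule.mem_span_singleton_self w)))
    rwa [LinearMap.BilinForm.orthogonal_orthogonal hB.nondeg hB.refl] at this
  obtain ⟨L0, hL0, hML0, hwL0⟩ := exists_inv_lag hB adj hM0 w
  have dL0 := hL0.finrank hB
  let f1 : V →ₗ[K] K := B.flip w'
  let f2 : V →ₗ[K] K := B.flip (M w')
  have hf1 : ∀ x, f1 x = B x w' := fun x => rfl
  have hf2 : ∀ x, f2 x = B x (M w') := fun x => rfl
  have hf2w : f2 w ≠ 0 := by rw [hf2, ← adj]; exact hw2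
  have d1 := hyper_finrank L0 f1 (hML0 w hwL0) hw2
  have d2 := hyper_finrank (L0 ⊓ LinearMap.ker f1) f2 (x := w) ⟨hwL0, hw1⟩ hf2w
  set H : Submodule K V := L0 ⊓ LinearMap.ker f1 ⊓ LinearMap.ker f2 with hHdef
  have mH : ∀ x, x ∈ H ↔ x ∈ L0 ∧ B x w' = 0 ∧ B x (M w') = 0 := fun x => by
    rw [hHdef, Submodule.mem_inf, Submodule.mem_inf, and_assoc]; rfl
  obtain ⟨h, rfl⟩ : ∃ h, n = h + 2 := ⟨n - 2, by omega⟩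
  have hh : 1 ≤ h := by omega
  have hH : Module.finrank K H = h := by omega
  have hMH : ∀ x ∈ H, M x ∈ H := by
    intro x hx
    rw [mH] at hx ⊢
    exact ⟨hML0 x hx.1, by rw [adj]; exact hx.2.2, by rw [hMi]; exact hx.2.1⟩
  let L2 := H ⊔ Submodule.span K {w}
  have hL2d : Module.finrank K L2 = h + 1 := by
    rw [← hH]; exact finrank_sup_span f2 (fun x hx => hx.2) hf2w
  have hL2L0 : L2 ≤ L0 := sup_le (fun x hx => hx.1.1) ((Submodule.span_singleton_le_iff_mem _ _).mpr hwL0)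
  let L := L2 ⊔ Submodule.span K {w'}
  have hLn : Module.finrank K L = h + 2 := by
    rw [show h + 2 = Module.finrank K L2 + 1 by rw [hL2d]]
    exact finrank_sup_span (B (M w)) (fun x hx => hL0.iso _ (hML0 w hwL0) _ (hL2L0 hx)) hw2
  have hL2L : L2 ≤ L := le_sup_left
  have hHL2 : H ≤ L2 := le_sup_left
  have hHL : H ≤ L := hHL2.trans hL2L
  have hw'L : w' ∈ L := Submodule.mem_sup_right (Submodule.mem_span_singleton_self w')
  have hL2w' : ∀ x ∈ L2, B x w' = 0 := by
    have : L2 ≤ LinearMap.ker f1 := sup_le (fun x hx => hx.1.2)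
      ((Submodule.span_singleton_le_iff_mem _ _).mpr hw1)
    exact fun x hx => this hx
  have hL : IsLag B L := by
    refine isLag_of_finrank hB ?_ (by rw [hLn, hV])
    intro x hx y hy
    obtain ⟨a, ha, b, hb, rfl⟩ := Submodule.mem_sup.mp hx
    obtain ⟨c, rfl⟩ := Submodule.mem_span_singleton.mp hb
    obtain ⟨a', ha', b', hb', rfl⟩ := Submodule.mem_sup.mp hy
    obtain ⟨c', rfl⟩ := Submodule.mem_span_singleton.mp hb'
    simp [hL2w' a ha, hB.comm0 (hL2w' a' ha'), hL0.iso a (hL2L0 ha) a' (hL2L0 ha'), hB.self]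
  have hmem : ∀ x ∈ L, M x ∈ L → x ∈ H := by
    intro x hx hMx
    obtain ⟨a, ha, b, hb, rfl⟩ := Submodule.mem_sup.mp hx
    obtain ⟨c, rfl⟩ := Submodule.mem_span_singleton.mp hb
    obtain ⟨a', ha', b', hb', rfl⟩ := Submodule.mem_sup.mp ha
    obtain ⟨c', rfl⟩ := Submodule.mem_span_singleton.mp hb'
    have hwL : w ∈ L := hL2L (Submodule.mem_sup_right (Submodule.mem_span_singleton_self w))
    have e1 := hL.iso _ hMx _ hw'L
    have e2 := hL.iso _ hwL _ hMx
    have z1 : B (M a') w' = 0 := hL2w' _ (hHL2 (hMH a' ha'))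
    have z2 : B (M w') w' = 0 := hB.comm0 (hM0 w')
    have z3 : B w (M a') = 0 := hL.iso _ hwL _ (hHL (hMH a' ha'))
    simp [z1, z2, hw2] at e1
    simp only [map_add, map_smul, z3, hM0, smul_eq_mul, mul_zero, zero_add] at e2
    have hc : c = 0 := (mul_eq_zero.mp e2).resolve_right hf2w
    rw [e1, hc]
    simpa using ha'
  have bH1 : ∀ x ∈ L, ∀ y ∈ H, B x (M y) = 0 := fun x hx y hy => hL.iso x hx _ (hHL (hMH y hy))
  have bH2 : ∀ x ∈ L, ∀ y ∈ H, B y (M x) = 0 := fun x hx y hy => by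
    rw [alt, bH1 x hx y hy, neg_zero]
  obtain ⟨C, t, s, ρ, κ, h0, gt0, gt1, gs, hsH, hρ, hh0, hsh, hs0, hCL, ct, hDC, hAC⟩ :=
    chain_setup hM hh hHL2 hMH hH hL2d
  let μ : K := - p.coeff 0 - ρ⁻¹ * q.coeff 0 * κ
  let w'' := ρ • (w' + μ • t 0) + s h
  let e : ℕ → V := fun i => if i ≤ h then t i else w'
  let e' : ℕ → V := fun i => if i ≤ h then s i else w''
  have et : ∀ i ≤ h, e i = t i := fun i hi => if_pos hi
  have eε : e (h+1) = w' := if_neg (by omega)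
  have es : ∀ i ≤ h, e' i = s i := fun i hi => if_pos hi
  have es' : e' (h+1) = w'' := if_neg (by omega)
  have ht0L2 : t 0 ∈ L2 := gt0.1 0 le_rfl (by omega)
  have hshL2 : s h ∈ L2 := gs.1 h (by omega) le_rfl
  have heL : ∀ i < h + 2, e i ∈ L := by
    intro i hi
    rcases Nat.lt_or_ge h i with hlt | hge
    · rw [show i = h + 1 by omega, eε]; exact hw'L
    · rw [et i hge]; exact hL2L (gt0.1 i (by omega) hge)
  have heL' : ∀ i < h + 2, e' i ∈ L := by
    intro i hi
    rcases Nat.lt_or_ge h i with hlt | hge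
    · rw [show i = h + 1 by omega, es']
      exact L.add_mem (L.smul_mem _ (L.add_mem hw'L (L.smul_mem _ (hL2L ht0L2)))) (hL2L hshL2)
    · rw [es i hge]; exact hL2L (gs.1 i (by omega) hge)
  have heW : ∀ W : Submodule K V, (∀ i < h + 2, e i ∈ W) → L ≤ W := by
    intro W hW
    apply sup_le
    · apply gt0.2
      intro i _ hi
      rw [← et i hi]
      exact hW i (by omega)
    · rw [Submodule.span_singleton_le_iff_mem, ← eε]
      exact hW _ (by omega)
  have heW' : ∀ W : Submodule K V, (∀ i < h + 2, e' i ∈ W) → L ≤ W := by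
    intro W hW
    have hL2W : L2 ≤ W := by
      apply gs.2
      intro i _ hi
      rw [← es i hi]
      exact hW i (by omega)
    apply sup_le hL2W
    rw [Submodule.span_singleton_le_iff_mem]
    have := hW (h+1) (by omega)
    rw [es', W.add_mem_iff_left (hL2W hshL2), W.smul_mem_iff hρ,
      W.add_mem_iff_left (W.smul_mem _ (hL2W ht0L2))] at this
    exact this
  obtain ⟨D, hD, hD1, hD2, hD3⟩ :=
    hook (h+2) h (by omega) e (indep_of_gen hLn heL heW) p hp hpn L heL heW
  obtain ⟨A, hA, hA1, hA2, hA3⟩ :=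
    hook (h+2) h (by omega) e' (indep_of_gen hLn heL' heW') q hq hqn L heL' heW'
  have hDC' := hDC D (fun i hi => by
    rw [← et i hi.le, ← et (i+1) hi]; exact hD1 i hi)
  have hAC' := hAC A (fun i hi => by
    rw [← es i hi.le, ← es (i+1) hi]; exact hA1 i hi)
  have htH : ∀ i, 1 ≤ i → i ≤ h → e i ∈ H := fun i h1 h2 => by rw [et i h2]; exact gt1.1 i h1 h2
  have hsH' : ∀ i, 1 ≤ i → i ≤ h → e' i ∈ H := fun i h1 h2 => by rw [es i h2]; exact hsH i h1 h2
  have sumH : ∀ (f : ℕ → V) (r : K[X]), (∀ i, 1 ≤ i → i ≤ h → f i ∈ H) →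
      (- ∑ i ∈ Finset.range (h+1), r.coeff i • f i) - (- r.coeff 0) • f 0 ∈ H := by
    intro f r hf
    rw [Finset.sum_range_succ']
    have : -(∑ k ∈ Finset.range h, r.coeff (k + 1) • f (k + 1) + r.coeff 0 • f 0) -
        (- r.coeff 0) • f 0 = - ∑ k ∈ Finset.range h, r.coeff (k + 1) • f (k + 1) := by
      rw [neg_smul]; abel
    rw [this]
    apply H.neg_mem
    apply H.sum_mem
    intro k hk
    rw [Finset.mem_range] at hk
    exact H.smul_mem _ (hf _ (by omega) (by omega))
  have Dt : D (t h) - w' ∈ H := by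
    have := hD2 h le_rfl (by omega)
    rw [et h le_rfl, eε] at this
    rw [this, sub_sub_cancel_left]
    exact H.neg_mem (H.smul_mem _ (gt1.1 h hh le_rfl))
  have Dw : D w' - (- p.coeff 0) • t 0 ∈ H := by
    have := sumH e p htH
    rw [← hD3, et 0 (by omega), show h + 2 - 1 = h + 1 by omega, eε] at this
    exact this
  have As : A (s h) - w'' ∈ H := by
    have := hA2 h le_rfl (by omega)
    rw [es h le_rfl, es'] at this
    rw [this, sub_sub_cancel_left]
    exact H.neg_mem (H.smul_mem _ (hsH h hh le_rfl))
  have Aw'' : A w'' - (- q.coeff 0) • s 0 ∈ H := by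
    have := sumH e' q hsH'
    rw [← hA3, es 0 (by omega), show h + 2 - 1 = h + 1 by omega, es'] at this
    exact this
  have low : ∀ i < h, D (e i) ∈ H ∧ A (e i) ∈ H := by
    intro i hi
    refine ⟨by rw [hD1 i hi]; exact htH _ (by omega) (by omega), ?_⟩
    rw [et i hi.le, ← ct i hi, hAC' _ (gt1.1 _ (by omega) (by omega))]
    exact hMH _ (gt1.1 _ (by omega) (by omega))
  have At0 : A (t 0) ∈ H := by rw [← et 0 (by omega)]; exact (low 0 (by omega)).2
  have hsh' : t h = ρ⁻¹ • (s h - C h0) := by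
    rw [hsh, add_sub_cancel_right, smul_smul, inv_mul_cancel₀ hρ, one_smul]
  have ew' : w' = ρ⁻¹ • (w'' - s h) - μ • t 0 := by
    simp only [w'', add_sub_cancel_right, smul_smul, inv_mul_cancel₀ hρ, one_smul]
  have At : A (t h) - (w' + μ • t 0) ∈ H := by
    have a1 := H.smul_mem ρ⁻¹ As
    have a2 := H.smul_mem ρ⁻¹ (hMH _ hh0)
    have a3 := H.smul_mem ρ⁻¹ (hsH h hh le_rfl)
    have := H.add_mem (H.sub_mem a1 a2) a3
    convert this using 1
    rw [hsh', map_smul, map_sub, hAC' h0 hh0]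
    simp only [w'', smul_add, smul_sub, smul_smul, inv_mul_cancel₀ hρ, one_smul]
    rw [inv_mul_cancel_left₀ hρ]
    abel
  have Aw : A w' - (p.coeff 0 • t 0 - w') ∈ H := by
    have a1 := H.smul_mem ρ⁻¹ Aw''
    have a2 := H.smul_mem ρ⁻¹ As
    have a3 := H.smul_mem (ρ⁻¹ * - q.coeff 0) hs0
    have a4 := H.smul_mem ρ⁻¹ (hsH h hh le_rfl)
    have a5 := H.smul_mem μ At0
    have := H.sub_mem (H.sub_mem (H.add_mem (H.sub_mem a1 a2) a3) a4) a5
    convert this using 1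
    have e1 : A w' = ρ⁻¹ • (A w'' - A (s h)) - μ • A (t 0) := by
      conv_lhs => rw [ew']
      simp
    rw [e1]
    have e2 : ρ⁻¹ • w'' = w' + μ • t 0 + ρ⁻¹ • s h := by
      simp only [w'', smul_add, smul_smul, inv_mul_cancel₀ hρ, one_smul]
      rw [inv_mul_cancel_left₀ hρ]
    simp only [smul_sub, e2, μ]
    module
  have bcongr : ∀ x ∈ L, ∀ x' ∈ L, ∀ y ∈ L, ∀ y' ∈ L, x - x' ∈ H → y - y' ∈ H →
      B x (M y) = B x' (M y') := by
    intro x hx x' hx' y hy y' hy' h1 h2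
    have a1 := bH2 y hy _ h1
    have a2 := bH1 x' hx' _ h2
    rw [map_sub, LinearMap.sub_apply, sub_eq_zero] at a1
    rw [map_sub, map_sub, sub_eq_zero] at a2
    rw [a1, a2]
  have AmemL : ∀ i < h + 2, A (e i) ∈ L := fun i hi => hA.1 _ (heL i hi)
  have DmemL : ∀ i < h + 2, D (e i) ∈ L := fun i hi => hD.1 _ (heL i hi)
  have ht0L : t 0 ∈ L := hL2L ht0L2
  have hthL : t h ∈ L := hL2L (gt0.1 h (by omega) le_rfl)
  have mixed : B (A (t h)) (M (D w')) = B (A w') (M (D (t h))) := by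
    rw [bcongr _ (hA.1 _ hthL) _ (L.add_mem hw'L (L.smul_mem _ ht0L)) _ (hD.1 _ hw'L) _
      (L.smul_mem _ ht0L) At Dw, bcongr _ (hA.1 _ hw'L) _ (L.sub_mem (L.smul_mem _ ht0L) hw'L) _
      (hD.1 _ hthL) _ hw'L Aw Dt]
    simp [hM0]
    rw [alt w' (t 0)]; ring
  refine ⟨L, D, A, hL, hD, hA, sym_of_gen heW ?_, ?_⟩
  · intro i hi j hj
    rcases Nat.lt_or_ge i h with hih | hih
    · rw [bH2 _ (DmemL j hj) _ (low i hih).2, bH1 _ (AmemL j hj) _ (low i hih).1]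
    rcases Nat.lt_or_ge j h with hjh | hjh
    · rw [bH2 _ (DmemL i hi) _ (low j hjh).2, bH1 _ (AmemL i hi) _ (low j hjh).1]
    rcases (show i = h ∨ i = h + 1 by omega) with rfl | rfl
    · rcases (show j = i ∨ j = i + 1 by omega) with rfl | rfl
      · rfl
      · rw [et i le_rfl, eε]; exact mixed
    · rcases (show j = h ∨ j = h + 1 by omega) with rfl | rfl
      · rw [et j le_rfl, eε]; exact mixed.symm
      · rfl
  · intro u hu hMD
    have hDu : D u ∈ H := hmem _ (hD.1 u hu) hMD
    have : C (D u) = u := hD.inj' hp0 _ (hL2L (hCL _ hDu)) _ hu (hDC' _ hDu)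
    conv_lhs => rw [← this]
    exact hAC' _ hDu

end casetwo

section hzero
set_option linter.unusedSectionVars false
variable {K : Type*} [Field K] {V : Type*} [AddCommGroup V] [Module K V] [FiniteDimensional K V]
  {B : LinearMap.BilinForm K V}

theorem exists_basis_values {L : Submodule K V} {n : ℕ} (hLn : Module.finrank K L = n)
    (φ : V →ₗ[K] K) {w : V} (hw : w ∈ L) (hw0 : w ≠ 0) {z : V} (hz : z ∈ L) (hφz : φ z ≠ 0)
    (β : ℕ → K) (hβ0 : β 0 = φ w) {j0 : ℕ} (hj0 : j0 < n) (hβ : β j0 ≠ 0) :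
    ∃ e : ℕ → V, e 0 = w ∧ (∀ i < n, e i ∈ L) ∧
      (∀ W : Submodule K V, (∀ i < n, e i ∈ W) → L ≤ W) ∧ ∀ i < n, φ (e i) = β i := by
  have hdec : ∀ (u : V), u ∈ L → φ u ≠ 0 → ∀ W : Submodule K V,
      L ⊓ LinearMap.ker φ ≤ W → u ∈ W → L ≤ W := by
    intro u hu hu0 W h1 h2 w hw
    have : w - (φ w / φ u) • u ∈ L ⊓ LinearMap.ker φ :=
      ⟨L.sub_mem hw (L.smul_mem _ hu), by simp [hu0]⟩
    have := W.add_mem (h1 this) (W.smul_mem (φ w / φ u) h2)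
    simpa using this
  have hd := hyper_finrank L φ hz hφz
  by_cases hφw : φ w = 0
  · have hf := finrank_sup_span (H := (⊥ : Submodule K V)) (v := w)
      (exists_dual_ne (U := ⊥) (z := w) (by simpa using hw0)).choose
      (exists_dual_ne (U := ⊥) (z := w) (by simpa using hw0)).choose_spec.2
      (by rw [(exists_dual_ne (U := ⊥) (z := w) (by simpa using hw0)).choose_spec.1]
          exact one_ne_zero)
    rw [bot_sup_eq, finrank_bot] at hf
    have hle : Submodule.span K {w} ≤ L ⊓ LinearMap.ker φ :=
      (Submodule.span_singleton_le_iff_mem _ _).mpr ⟨hw, hφw⟩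
    have hm := Submodule.finrank_mono hle
    obtain ⟨ε, hε, hW⟩ := exists_fill (n - 2) _ _ hle (by omega)
    have hj : j0 ≠ 0 := by rintro rfl; exact hβ (hβ0.trans hφw)
    let u := (β j0 / φ z) • z
    have hu : u ∈ L := L.smul_mem _ hz
    have hφu : φ u = β j0 := by simp [u, hφz]
    let e : ℕ → V := fun j => if j = 0 then w else if j = j0 then u else
      ε (if j < j0 then j - 1 else j - 2) + (β j / β j0) • u
    have e0 : e 0 = w := if_pos rfl
    have ej : e j0 = u := by simp [e, hj]
    have eo : ∀ j, j ≠ 0 → j ≠ j0 → e j = ε (if j < j0 then j - 1 else j - 2) + (β j / β j0) • u :=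
      fun j h1 h2 => by simp only [e]; rw [if_neg h1, if_neg h2]
    have idx : ∀ j < n, j ≠ 0 → j ≠ j0 → (if j < j0 then j - 1 else j - 2) < n - 2 := by
      intro j h1 h2 h3
      split_ifs <;> omega
    refine ⟨e, e0, ?_, ?_, ?_⟩
    · intro i hi
      by_cases h1 : i = 0
      · rw [h1, e0]; exact hw
      by_cases h2 : i = j0
      · rw [h2, ej]; exact hu
      rw [eo i h1 h2]
      exact L.add_mem (hε _ (idx i hi h1 h2)).1 (L.smul_mem _ hu)
    · intro W hWe
      have huW : u ∈ W := by rw [← ej]; exact hWe _ hj0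
      have hwW : w ∈ W := by rw [← e0]; exact hWe _ (by omega)
      refine hdec u hu (by rw [hφu]; exact hβ) W ?_ huW
      refine hW W ((Submodule.span_singleton_le_iff_mem _ _).mpr hwW) ?_
      intro k hk
      obtain ⟨j, h1, h2, h3, h4⟩ : ∃ j < n, j ≠ 0 ∧ j ≠ j0 ∧ (if j < j0 then j - 1 else j - 2) = k := by
        by_cases hc : k + 1 < j0
        · exact ⟨k + 1, by omega, by omega, by omega, by rw [if_pos hc]; omega⟩
        · exact ⟨k + 2, by omega, by omega, by omega, by rw [if_neg (by omega)]; omega⟩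
      have := hWe j h1
      rw [eo j h2 h3, h4, W.add_mem_iff_left (W.smul_mem _ huW)] at this
      exact this
    · intro i hi
      by_cases h1 : i = 0
      · rw [h1, e0, hβ0]
      by_cases h2 : i = j0
      · rw [h2, ej]; exact hφu
      have h3 : φ (ε (if i < j0 then i - 1 else i - 2)) = 0 := (hε _ (idx i hi h1 h2)).2
      rw [eo i h1 h2, map_add, h3, map_smul, hφu, smul_eq_mul, div_mul_cancel₀ _ hβ, zero_add]
  · obtain ⟨ε, hε, hW⟩ := exists_fill (n - 1) ⊥ (L ⊓ LinearMap.ker φ) bot_le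
      (by rw [finrank_bot]; omega)
    refine ⟨fun i => Nat.casesOn (motive := fun _ => V) i w
      (fun j => ε j + (β (j+1) / φ w) • w), rfl, ?_, ?_, ?_⟩
    · intro i hi
      cases i with
      | zero => exact hw
      | succ i => exact L.add_mem (hε i (by omega)).1 (L.smul_mem _ hw)
    · intro W hWe
      have hwW : w ∈ W := hWe 0 (by omega)
      refine hdec w hw hφw W (hW W bot_le ?_) hwW
      intro j hj
      exact (W.add_mem_iff_left (W.smul_mem _ hwW)).mp (hWe (j+1) (by omega))
    · intro i hi
      cases i with
      | zero => exact hβ0.symm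
      | succ i =>
        have : φ (ε i) = 0 := (hε i (by omega)).2
        change φ (ε i + (β (i+1) / φ w) • w) = _
        rw [map_add, this, map_smul, smul_eq_mul, div_mul_cancel₀ _ hφw, zero_add]

theorem core_zero_aux {M : V →ₗ[K] V} {n : ℕ} (hn : 0 < n)
    {L : Submodule K V} (hLn : Module.finrank K L = n)
    (sym : ∀ x ∈ L, ∀ y ∈ L, B x (M y) = B y (M x))
    {w z : V} (hw : w ∈ L) (hw0 : w ≠ 0) (hz : z ∈ L) (hz0 : B w (M z) ≠ 0) {p q : K[X]}
    (hp : p.Monic) (hq : q.Monic) (hpn : p.natDegree = n) (hqn : q.natDegree = n)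
    {γ : K} (hγ : γ ≠ 0) (hend : γ⁻¹ * (p.coeff 0 - q.coeff 0) + p.coeff 0 * B w (M w) = 0)
    (hne : B w (M w) ≠ 0 ∨ B w (M w) = 0 ∧ ∃ j, 1 ≤ j ∧ j < n ∧ p.coeff (n - j) ≠ q.coeff (n - j)) :
    ∃ D A : V →ₗ[K] V, CycOn L D p ∧ CycOn L A q ∧
      ∀ u ∈ L, ∀ w ∈ L, B (A u) (M (D w)) = B (A w) (M (D u)) := by
  let φ : V →ₗ[K] K := (B w).comp M
  have hφ : ∀ x, φ x = B w (M x) := fun x => rfl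
  let β : ℕ → K := fun j => γ⁻¹ * (p.coeff (n-j) - q.coeff (n-j)) + p.coeff (n-j) * B w (M w)
  have hpc : p.coeff n = 1 := by rw [← hpn]; exact hp
  have hqc : q.coeff n = 1 := by rw [← hqn]; exact hq
  have hβ0 : β 0 = φ w := by simp [β, hpc, hqc, hφ]
  have hβn : β n = 0 := by simpa [β] using hend
  obtain ⟨j0, hj0, hβ⟩ : ∃ j0 < n, β j0 ≠ 0 := by
    rcases hne with h | ⟨h, j, h1, h2, h3⟩
    · exact ⟨0, hn, by rw [hβ0]; exact h⟩
    · refine ⟨j, h2, ?_⟩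
      simp only [β, h, mul_zero, add_zero]
      exact mul_ne_zero (inv_ne_zero hγ) (sub_ne_zero.mpr h3)
  obtain ⟨e, e0, heL, heW, hφe⟩ := exists_basis_values hLn φ hw hw0 hz hz0 β hβ0 hj0 hβ
  obtain ⟨D, hD, -, hD2, hD3⟩ := hook n 0 hn e (indep_of_gen hLn heL heW) p hp hpn L heL heW
  obtain ⟨A, hA, -, hA2, hA3⟩ := hook n 0 hn e (indep_of_gen hLn heL heW) q hq hqn L heL heW
  have key : ∀ i < n, A (e i) = D (e i) + (γ * φ (D (e i))) • w := by
    intro i hi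
    have hb : γ * (β (i+1) - p.coeff (n-1-i) * φ w) = p.coeff (n-1-i) - q.coeff (n-1-i) := by
      simp only [β, hφ, show n - (i+1) = n - 1 - i by omega]
      field_simp
      ring
    rcases Nat.lt_or_ge (i+1) n with h | h
    · rw [hA2 i (by omega) h, hD2 i (by omega) h, map_sub, map_smul, hφe _ h, e0, Nat.sub_zero,
        smul_eq_mul, hb]
      module
    · have : i = n - 1 := by omega
      subst this
      rw [show n - 1 + 1 = n by omega, hβn, Nat.sub_self] at hb
      rw [hA3, hD3]
      simp only [zero_add, Finset.sum_range_one, e0, map_neg, map_smul, smul_eq_mul]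
      rw [show γ * -(p.coeff 0 * φ w) = p.coeff 0 - q.coeff 0 by rw [← hb]; ring]
      module
  refine ⟨D, A, hD, hA, sym_of_gen heW ?_⟩
  intro i hi j hj
  rw [key i hi, key j hj]
  have h1 := sym _ (hD.1 _ (heL i hi)) _ (hD.1 _ (heL j hj))
  simp only [map_add, LinearMap.add_apply, map_smul, LinearMap.smul_apply, smul_eq_mul, h1, hφ]
  ring

theorem exists_isotropic [Finite K] {M : V →ₗ[K] V} {n : ℕ} (hn : 3 ≤ n)
    {L : Submodule K V} (hLn : Module.finrank K L = n) : ∃ w ∈ L, w ≠ 0 ∧ B w (M w) = 0 := by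
  classical
  cases nonempty_fintype K
  let b := Module.finBasisOfFinrankEq K L hLn
  let f : MvPolynomial (Fin n) K := ∑ i, ∑ j,
    MvPolynomial.C (B (b i : V) (M (b j : V))) * (MvPolynomial.X i * MvPolynomial.X j)
  have hf : f.totalDegree < Fintype.card (Fin n) := by
    rw [Fintype.card_fin]
    refine lt_of_le_of_lt ?_ (show 2 < n by omega)
    refine MvPolynomial.totalDegree_finsetSum_le fun i _ => ?_
    refine MvPolynomial.totalDegree_finsetSum_le fun j _ => ?_
    refine (MvPolynomial.totalDegree_mul _ _).trans ?_
    rw [MvPolynomial.totalDegree_C, zero_add]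
    refine (MvPolynomial.totalDegree_mul _ _).trans ?_
    rw [MvPolynomial.totalDegree_X, MvPolynomial.totalDegree_X]
  have hev : ∀ x : Fin n → K, MvPolynomial.eval x f =
      B ((∑ i, x i • b i : L) : V) (M ((∑ i, x i • b i : L) : V)) := by
    intro x
    simp only [f, map_sum, map_mul, MvPolynomial.eval_C, MvPolynomial.eval_X,
      Submodule.coe_sum, Submodule.coe_smul, LinearMap.sum_apply, map_smul, LinearMap.smul_apply,
      smul_eq_mul]
    rw [Finset.sum_comm]
    refine Finset.sum_congr rfl fun i _ => ?_
    rw [Finset.mul_sum]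
    refine Finset.sum_congr rfl fun j _ => ?_
    ring
  obtain ⟨r, hr⟩ := CharP.exists K
  have hrp : r.Prime := (CharP.char_is_prime_or_zero K r).resolve_right (by
    rintro rfl
    exact CharP.char_ne_zero_of_finite K 0 rfl)
  have hdvd := char_dvd_card_solutions r hf
  have h0 : MvPolynomial.eval (0 : Fin n → K) f = 0 := by rw [hev]; simp
  have hcard : 1 < Fintype.card {x : Fin n → K // MvPolynomial.eval x f = 0} := by
    have hpos : 0 < Fintype.card {x : Fin n → K // MvPolynomial.eval x f = 0} :=
      Fintype.card_pos_iff.mpr ⟨⟨0, h0⟩⟩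
    exact lt_of_lt_of_le hrp.one_lt (Nat.le_of_dvd hpos hdvd)
  obtain ⟨⟨x, hx⟩, hne⟩ := Fintype.exists_ne_of_one_lt_card hcard ⟨0, h0⟩
  refine ⟨(∑ i, x i • b i : L), Submodule.coe_mem _, ?_, by rw [← hev]; exact hx⟩
  intro hz
  apply hne
  rw [Submodule.coe_eq_zero] at hz
  have := Fintype.linearIndependent_iff.mp b.linearIndependent x hz
  exact Subtype.ext (funext this)

theorem core_I_zero {M : V →ₗ[K] V} {n : ℕ} (hn : 3 ≤ n)
    {L : Submodule K V} (hL : IsLag B L) (hLn : Module.finrank K L = n)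
    (hmem : ∀ x ∈ L, M x ∈ L → x = 0)
    (sym : ∀ x ∈ L, ∀ y ∈ L, B x (M y) = B y (M x))
    {v : V} (hv : v ∈ L) (hvv : B v (M v) ≠ 0) {p q : K[X]}
    (hp : p.Monic) (hq : q.Monic) (hpn : p.natDegree = n) (hqn : q.natDegree = n)
    (hp0 : p.coeff 0 ≠ 0) (hpq : p ≠ q) : Core B M p q := by
  have fin : ∀ D A : V →ₗ[K] V, CycOn L D p → CycOn L A q →
      (∀ u ∈ L, ∀ w ∈ L, B (A u) (M (D w)) = B (A w) (M (D u))) → Core B M p q := by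
    intro D A hD hA h
    refine ⟨L, D, A, hL, hD, hA, h, ?_⟩
    intro u hu hMD
    have h1 := hmem _ (hD.1 u hu) hMD
    rw [hD.inj hp0 u hu h1]
    simp
  by_cases hc : ∃ c : K, c ≠ 0 ∧ c ^ n * p.coeff 0 ≠ q.coeff 0
  · obtain ⟨c, hc0, hc⟩ := hc
    let p' : K[X] := C (c ^ n) * p.comp (C c⁻¹ * X)
    have hd1 : (C c⁻¹ * X : K[X]).natDegree = 1 := natDegree_C_mul_X _ (inv_ne_zero hc0)
    have hcn : c ^ n ≠ 0 := pow_ne_zero n hc0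
    have hp'n : p'.natDegree = n := by
      rw [natDegree_C_mul hcn, natDegree_comp, hd1, hpn, mul_one]
    have hp'm : p'.Monic := by
      rw [Monic, leadingCoeff_mul, leadingCoeff_C, leadingCoeff_comp (by rw [hd1]; exact one_ne_zero),
        leadingCoeff_C_mul_X, hp.leadingCoeff, hpn, one_mul, ← mul_pow, mul_inv_cancel₀ hc0, one_pow]
    have hp'0 : p'.coeff 0 = c ^ n * p.coeff 0 := by
      rw [coeff_zero_eq_eval_zero, coeff_zero_eq_eval_zero]
      simp [p']
    have hp'00 : p'.coeff 0 ≠ 0 := by rw [hp'0]; exact mul_ne_zero hcn hp0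
    have hv0 : v ≠ 0 := by rintro rfl; simp at hvv
    have hsub : p'.coeff 0 - q.coeff 0 ≠ 0 := by rw [hp'0]; exact sub_ne_zero.mpr hc
    obtain ⟨D, A, hD, hA, h⟩ := core_zero_aux (B := B) (M := M) (by omega) hLn sym hv hv0 hv hvv hp'm
      hq hp'n hqn (γ := - (p'.coeff 0 - q.coeff 0) / (p'.coeff 0 * B v (M v)))
      (div_ne_zero (neg_ne_zero.mpr hsub) (mul_ne_zero hp'00 hvv)) (by field_simp; ring)
      (Or.inl hvv)
    refine fin (c⁻¹ • D) A ?_ hA ?_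
    · obtain ⟨hD1, y, hy, hy0, hyW⟩ := hD
      refine ⟨fun x hx => L.smul_mem _ (hD1 x hx), y, hy, ?_, ?_⟩
      · have e : aeval D p' = c ^ n • aeval (c⁻¹ • D) p := by
          simp only [p', map_mul, aeval_C, aeval_comp, aeval_X]
          rw [← Algebra.smul_def, ← Algebra.smul_def]
        rw [e, LinearMap.smul_apply] at hy0
        exact (smul_eq_zero.mp hy0).resolve_left hcn
      · intro W h1 h2
        refine hyW W h1 fun x hx => ?_
        have := h2 x hx
        rwa [LinearMap.smul_apply, W.smul_mem_iff (inv_ne_zero hc0)] at this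
    · intro u hu w hw
      simp only [LinearMap.smul_apply, map_smul, h u hu w hw]
  · push Not at hc
    have hpq0 : p.coeff 0 = q.coeff 0 := by simpa using hc 1 one_ne_zero
    have hfin : Finite K := by
      have h1 : (X ^ n - C 1 : K[X]) ≠ 0 := X_pow_sub_C_ne_zero (by omega) 1
      have h2 : (Set.univ : Set K) ⊆ ((X ^ n - C 1 : K[X]).rootSet K ∪ {0}) := by
        intro c _
        by_cases hc0 : c = 0
        · right; exact hc0
        · left
          rw [mem_rootSet]
          refine ⟨h1, ?_⟩
          have := hc c hc0
          rw [← hpq0] at this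
          have h3 : c ^ n = 1 := mul_right_cancel₀ hp0 (by rw [this, one_mul])
          simp [h3]
      exact Set.finite_univ_iff.mp (((rootSet_finite _ _).union (Set.finite_singleton 0)).subset h2)
    obtain ⟨w, hw, hw0, hww⟩ := exists_isotropic (B := B) (M := M) hn hLn
    obtain ⟨z, hz, hwz⟩ : ∃ z ∈ L, B w (M z) ≠ 0 := by
      by_contra hcon
      push Not at hcon
      apply hw0
      apply hmem w hw
      apply hL.max
      intro y hy
      rw [sym y hy w hw]
      exact hcon y hy
    have hex : ∃ j, 1 ≤ j ∧ j < n ∧ p.coeff (n - j) ≠ q.coeff (n - j) := by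
      by_contra hcon
      push Not at hcon
      apply hpq
      ext k
      rcases Nat.eq_zero_or_pos k with rfl | hk
      · exact hpq0
      rcases lt_trichotomy k n with h | h | h
      · have := hcon (n - k) (by omega) (by omega)
        rwa [show n - (n - k) = k by omega] at this
      · rw [h]
        conv_lhs => rw [← hpn]
        conv_rhs => rw [← hqn]
        rw [hp.coeff_natDegree, hq.coeff_natDegree]
      · rw [coeff_eq_zero_of_natDegree_lt (by omega), coeff_eq_zero_of_natDegree_lt (by omega)]
    obtain ⟨D, A, hD, hA, h⟩ := core_zero_aux (B := B) (M := M) (by omega) hLn sym hw hw0 hz hwz hp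
      hq hpn hqn (γ := 1) one_ne_zero (by rw [hpq0, hww]; simp) (Or.inr ⟨hww, hex⟩)
    exact fin D A hD hA h

end hzero

section assembly
set_option linter.unusedSectionVars false
variable {K : Type*} [Field K] {V : Type*} [AddCommGroup V] [Module K V] [FiniteDimensional K V]
  {B : LinearMap.BilinForm K V}

theorem core_all (hB : IsSympForm B) {M : V →ₗ[K] V} (hMi : ∀ x y, B (M x) (M y) = B x y)
    (hns : ∀ c : K, M ≠ c • (1 : V →ₗ[K] V)) {n : ℕ} (hn : 3 ≤ n)
    (hV : Module.finrank K V = 2 * n) {p q : K[X]}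
    (hp : p.Monic) (hq : q.Monic) (hpn : p.natDegree = n) (hqn : q.natDegree = n)
    (hp0 : p.coeff 0 ≠ 0) (hpq : p ≠ q) : Core B M p q := by
  by_cases hM0 : ∀ x, B x (M x) = 0
  · exact core_II hB hMi hM0 hns hn hV hp hq hpn hqn hp0
  push Not at hM0
  obtain ⟨v, hvv⟩ := hM0
  have hinj : Function.Injective M := isom_inj hB hMi
  let E := LinearEquiv.ofInjectiveEndo M hinj
  let N : V →ₗ[K] V := E.symm.toLinearMap
  have hNM : ∀ x, N (M x) = x := fun x => E.symm_apply_apply x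
  have hMN : ∀ x, M (N x) = x := fun x => E.apply_symm_apply x
  have adj1 : ∀ x y, B (M x) y = B x (N y) := fun x y => by
    conv_lhs => rw [← hMN y, hMi]
  have adj2 : ∀ x y, B (N x) y = B x (M y) := fun x y => by
    conv_rhs => rw [← hMN x, hMi]
  let T := M + N
  have hT : ∀ x, T x = M x + N x := fun x => rfl
  have sT : ∀ x y, B (T x) y = B x (T y) := by
    intro x y
    rw [hT, hT, map_add, map_add, LinearMap.add_apply, adj1, adj2, add_comm]
  have sT0 : ∀ x, B x (T x) = 0 := by
    intro x
    rw [hT, map_add, ← adj1, hB.neg (M x) x, add_neg_cancel]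
  obtain ⟨L, hL, hTL, hv⟩ := exists_inv_lag hB sT sT0 v
  have hLn : Module.finrank K L = n := by have := hL.finrank hB; omega
  have sym : ∀ x ∈ L, ∀ y ∈ L, B x (M y) = B y (M x) := by
    intro x hx y hy
    have := hL.iso x hx _ (hTL y hy)
    rw [hT, map_add, ← adj1, hB.neg (M x) y] at this
    exact eq_of_sub_eq_zero (by rw [sub_eq_add_neg]; exact this)
  let H := L ⊓ L.comap M
  have hMH : ∀ x ∈ H, M x ∈ H := by
    rintro x ⟨h1, h2⟩
    refine ⟨h2, ?_⟩
    have h3 := hTL (M x) h2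
    rw [hT, hNM] at h3
    exact (L.add_mem_iff_left h1).mp h3
  rcases Nat.eq_zero_or_pos (Module.finrank K H) with h0 | h0
  · have hb : H = ⊥ := Submodule.finrank_eq_zero.mp h0
    refine core_I_zero hn hL hLn ?_ sym hv hvv hp hq hpn hqn hp0 hpq
    intro x h1 h2
    have : x ∈ H := ⟨h1, h2⟩
    rwa [hb, Submodule.mem_bot] at this
  · exact core_I_pos hinj h0 hL hLn inf_le_left rfl hMH (fun x h1 h2 => ⟨h1, h2⟩) sym hv hvv
      hp hq hpn hqn hp0

end assembly

section abstractmain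
set_option linter.unusedSectionVars false
variable {K : Type*} [Field K] {V : Type*} [AddCommGroup V] [Module K V] [FiniteDimensional K V]
  {B : LinearMap.BilinForm K V}

theorem main_abs_aux (hB : IsSympForm B) {M P₁ P₂ : V →ₗ[K] V}
    (hM : ∀ x y, B (M x) (M y) = B x y) (hP₁ : ∀ x y, B (P₁ x) (P₁ y) = B x y)
    (hP₂ : ∀ x y, B (P₂ x) (P₂ y) = B x y)
    (hns : ∀ c : K, M ≠ c • (1 : V →ₗ[K] V)) {n : ℕ} (hn : 3 ≤ n)
    (hV : Module.finrank K V = 2 * n) {a a' b b' : K[X]} (ha : Recip n a a') (hb : Recip n b b')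
    (hm₁ : minpoly K P₁ = a * a') (hm₂ : minpoly K P₂ = b * b') (hne : b' ≠ a) :
    ∃ S₁ S₂ X Z : V →ₗ[K] V, (∀ x y, B (S₁ x) (S₁ y) = B x y) ∧ (∀ x y, B (S₂ x) (S₂ y) = B x y) ∧
      S₁ * P₁ = X * S₁ ∧ S₂ * P₂ = Z * S₂ ∧ M = X * Z := by
  have inv : ∀ X : V →ₗ[K] V, (∀ x y, B (X x) (X y) = B x y) →
      ∃ Y : V →ₗ[K] V, X * Y = 1 ∧ Y * X = 1 ∧ ∀ x y, B (Y x) (Y y) = B x y := by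
    intro X hX
    let E := LinearEquiv.ofInjectiveEndo X (isom_inj hB hX)
    have h1 : ∀ x, X (E.symm x) = x := fun x => E.apply_symm_apply x
    refine ⟨E.symm.toLinearMap, LinearMap.ext h1,
      LinearMap.ext fun x => E.symm_apply_apply x, fun x y => ?_⟩
    rw [← hX]
    exact congrArg₂ (fun u v => B u v) (h1 x) (h1 y)
  obtain ⟨Q, hPQ, hQP, hQ⟩ := inv P₂ hP₂
  have c1 := crit_of_minpoly P₁ ha hm₁
  have c2 := (crit_of_minpoly P₂ hb hm₂).inv (by omega) hb hPQ hQP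
  obtain ⟨Y, hY, y1, y2⟩ := construct hB hM hV hb.symm ha
    (core_all hB hM hns hn hV hb.bm ha.am hb.bn ha.an hb.symm.coeff_zero hne)
  obtain ⟨Z, hYZ, hZY, hZ⟩ := inv Y hY
  have hX : ∀ x y, B ((M * Y) x) ((M * Y) y) = B x y := fun x y => by
    rw [Module.End.mul_apply, Module.End.mul_apply, hM, hY]
  obtain ⟨S₁, hS₁, e1⟩ := crit_conj hB hV hP₁ hX ha c1 y2
  obtain ⟨S₂, hS₂, e2⟩ := crit_conj hB hV hQ hY hb.symm c2 y1
  refine ⟨S₁, S₂, M * Y, Z, hS₁, hS₂, e1, ?_, ?_⟩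
  · calc S₂ * P₂ = Z * Y * S₂ * P₂ := by rw [hZY, one_mul]
      _ = Z * (Y * S₂) * P₂ := by rw [mul_assoc Z]
      _ = Z * S₂ * (Q * P₂) := by rw [← e2]; simp only [mul_assoc]
      _ = Z * S₂ := by rw [hQP, mul_one]
  · rw [mul_assoc, hYZ, mul_one]

theorem main_abs (hB : IsSympForm B) {M P₁ P₂ : V →ₗ[K] V}
    (hM : ∀ x y, B (M x) (M y) = B x y) (hP₁ : ∀ x y, B (P₁ x) (P₁ y) = B x y)
    (hP₂ : ∀ x y, B (P₂ x) (P₂ y) = B x y)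
    (hns : ∀ c : K, M ≠ c • (1 : V →ₗ[K] V)) {n : ℕ} (hn : 3 ≤ n)
    (hV : Module.finrank K V = 2 * n) {a a' b b' : K[X]} (ha : Recip n a a') (hb : Recip n b b')
    (hm₁ : minpoly K P₁ = a * a') (hm₂ : minpoly K P₂ = b * b') :
    ∃ S₁ S₂ X Z : V →ₗ[K] V, (∀ x y, B (S₁ x) (S₁ y) = B x y) ∧ (∀ x y, B (S₂ x) (S₂ y) = B x y) ∧
      S₁ * P₁ = X * S₁ ∧ S₂ * P₂ = Z * S₂ ∧ M = X * Z := by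
  by_cases h : b' = a
  · refine main_abs_aux hB hM hP₁ hP₂ hns hn hV ha hb.symm hm₁ (by rw [hm₂, mul_comm]) ?_
    intro h2
    have hc := hb.cop
    rw [h, h2, isCoprime_self] at hc
    have := natDegree_eq_zero_of_isUnit hc
    have := ha.an
    omega
  · exact main_abs_aux hB hM hP₁ hP₂ hns hn hV ha hb hm₁ hm₂ h

theorem recip_of {n : ℕ} {q : K[X]} (hm : q.Monic) (hn : q.natDegree = n) (h0 : q.coeff 0 ≠ 0)
    (hc : IsCoprime q (recipPoly q)) : Recip n q (recipPoly q) := by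
  have htr : q.natTrailingDegree = 0 := natTrailingDegree_eq_zero.mpr (Or.inr h0)
  refine ⟨hm, ?_, hn, ?_, hc, q.coeff 0, h0, ?_⟩
  · rw [Monic, recipPoly, leadingCoeff_mul, leadingCoeff_C, reverse_leadingCoeff, trailingCoeff, htr,
      inv_mul_cancel₀ h0]
  · rw [recipPoly, natDegree_C_mul (inv_ne_zero h0), reverse_natDegree, htr, hn, Nat.sub_zero]
  · rw [recipPoly, ← mul_assoc, ← C_mul, mul_inv_cancel₀ h0, C_1, one_mul, reverse, hn]

theorem sympJ_sq (n : ℕ) : sympJ n K * sympJ n K = -1 := by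
  rw [sympJ, Matrix.fromBlocks_multiply, ← Matrix.fromBlocks_one, Matrix.fromBlocks_neg]
  simp

theorem symp_transpose {n : ℕ} {P : Matrix (Fin n ⊕ Fin n) (Fin n ⊕ Fin n) K}
    (h : P * sympJ n K * Pᵀ = sympJ n K) : Pᵀ * sympJ n K * P = sympJ n K := by
  have h1 : P * (-(sympJ n K * Pᵀ * sympJ n K)) = 1 := by
    rw [mul_neg, ← mul_assoc, ← mul_assoc, h, sympJ_sq, neg_neg]
  have h2 := mul_eq_one_comm.mp h1
  have h3 := congrArg (fun X => sympJ n K * X) h2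
  simp only [mul_one, mul_neg, neg_mul] at h3
  rw [← mul_assoc, ← mul_assoc, ← mul_assoc, sympJ_sq] at h3
  simpa using h3

theorem symp_form (n : ℕ) : IsSympForm (Matrix.toBilin' (sympJ n K)) := by
  refine ⟨fun x => ?_, fun x hx => ?_⟩
  · rw [Matrix.toBilin'_apply', sympJ, Matrix.fromBlocks_mulVec]
    simp only [Matrix.zero_mulVec, Matrix.one_mulVec, zero_add, add_zero, Matrix.neg_mulVec,
      dotProduct, Fintype.sum_sum_type, Sum.elim_inl, Sum.elim_inr, Function.comp_apply,
      Pi.neg_apply, mul_neg, Finset.sum_neg_distrib]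
    rw [add_neg_eq_zero]
    exact Finset.sum_congr rfl fun i _ => mul_comm _ _
  · have h1 : Matrix.vecMul x (sympJ n K) = 0 := by
      apply dotProduct_eq_zero
      intro y
      rw [← Matrix.dotProduct_mulVec, ← Matrix.toBilin'_apply']
      exact hx y
    have h2 := congrArg (fun z => Matrix.vecMul z (sympJ n K)) h1
    simp only [Matrix.vecMul_vecMul, sympJ_sq] at h2
    simpa [Matrix.vecMul_neg] using h2

theorem isom_iff {n : ℕ} (P : Matrix (Fin n ⊕ Fin n) (Fin n ⊕ Fin n) K) :
    IsSymplectic P ↔ ∀ x y, Matrix.toBilin' (sympJ n K) (Matrix.toLin' P x) (Matrix.toLin' P y) =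
      Matrix.toBilin' (sympJ n K) x y := by
  have key : ∀ x y, Matrix.toBilin' (sympJ n K) (Matrix.toLin' P x) (Matrix.toLin' P y) =
      Matrix.toBilin' (Pᵀ * sympJ n K * P) x y := by
    intro x y
    simp only [Matrix.toBilin'_apply', Matrix.toLin'_apply]
    rw [← Matrix.mulVec_mulVec, ← Matrix.mulVec_mulVec, Matrix.dotProduct_mulVec x Pᵀ,
      Matrix.vecMul_transpose]
  constructor
  · intro h x y
    rw [key, symp_transpose h]
  · intro h
    have e : Matrix.toBilin' (Pᵀ * sympJ n K * P) = Matrix.toBilin' (sympJ n K) := by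
      apply LinearMap.ext₂
      intro x y
      rw [← key, h]
    have e2 := Matrix.toBilin'.injective e
    have := symp_transpose (P := Pᵀ) (by rwa [Matrix.transpose_transpose])
    rwa [Matrix.transpose_transpose] at this

end abstractmain

theorem product_of_cyclic_strictly_hyperbolic_classes {K : Type*} [Field K] {n : ℕ}
    (hn : 3 ≤ n)
    (P₁ P₂ : Matrix (Fin n ⊕ Fin n) (Fin n ⊕ Fin n) K)
    (hP₁ : IsSymplectic P₁) (hP₂ : IsSymplectic P₂)
    (hc₁ : IsCyclicMat P₁) (hc₂ : IsCyclicMat P₂)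
    (hs₁ : IsStrictlyHyperbolic P₁) (hs₂ : IsStrictlyHyperbolic P₂)
    (M : Matrix (Fin n ⊕ Fin n) (Fin n ⊕ Fin n) K)
    (hM : IsSymplectic M)
    (hMns : ∀ c : K, M ≠ c • (1 : Matrix (Fin n ⊕ Fin n) (Fin n ⊕ Fin n) K)) :
    ∃ S₁ S₂ : Matrix (Fin n ⊕ Fin n) (Fin n ⊕ Fin n) K,
      IsSymplectic S₁ ∧ IsSymplectic S₂ ∧
      M = (S₁ * P₁ * S₁⁻¹) * (S₂ * P₂ * S₂⁻¹) := by
  obtain ⟨q₁, hm₁, hn₁, h0₁, hcop₁, hmin₁⟩ := hs₁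
  obtain ⟨q₂, hm₂, hn₂, h0₂, hcop₂, hmin₂⟩ := hs₂
  have hV : Module.finrank K (Fin n ⊕ Fin n → K) = 2 * n := by
    rw [Module.finrank_fintype_fun_eq_card, Fintype.card_sum, Fintype.card_fin]; omega
  obtain ⟨S₁, S₂, X, Z, hS₁, hS₂, e1, e2, e3⟩ := main_abs (symp_form n) ((isom_iff M).mp hM)
    ((isom_iff P₁).mp hP₁) ((isom_iff P₂).mp hP₂) (fun c hc => hMns c (by
      apply Matrix.toLin'.injective
      rw [hc, map_smul, Matrix.toLin'_one]; rfl)) hn hV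
    (recip_of hm₁ hn₁ h0₁ hcop₁) (recip_of hm₂ hn₂ h0₂ hcop₂)
    (by rw [Matrix.minpoly_toLin', hmin₁]) (by rw [Matrix.minpoly_toLin', hmin₂])
  have conj : ∀ (S Y : (Fin n ⊕ Fin n → K) →ₗ[K] (Fin n ⊕ Fin n → K))
      (P : Matrix (Fin n ⊕ Fin n) (Fin n ⊕ Fin n) K),
      (∀ x y, Matrix.toBilin' (sympJ n K) (S x) (S y) = Matrix.toBilin' (sympJ n K) x y) →
      S * Matrix.toLin' P = Y * S → IsSymplectic (LinearMap.toMatrix' S) ∧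
      LinearMap.toMatrix' S * P * (LinearMap.toMatrix' S)⁻¹ = LinearMap.toMatrix' Y := by
    intro S Y P hS he
    have hs : IsSymplectic (LinearMap.toMatrix' S) := by
      rw [isom_iff, Matrix.toLin'_toMatrix']; exact hS
    refine ⟨hs, ?_⟩
    have h1 := congrArg LinearMap.toMatrix' he
    rw [LinearMap.toMatrix'_mul, LinearMap.toMatrix'_mul, LinearMap.toMatrix'_toLin'] at h1
    have hu : IsUnit (LinearMap.toMatrix' S).det := by
      have h2 : LinearMap.toMatrix' S * (-(sympJ n K * (LinearMap.toMatrix' S)ᵀ * sympJ n K)) = 1 := by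
        have h3 : LinearMap.toMatrix' S * sympJ n K * (LinearMap.toMatrix' S)ᵀ = sympJ n K := hs
        rw [mul_neg, ← mul_assoc, ← mul_assoc, h3, sympJ_sq, neg_neg]
      exact Matrix.isUnit_det_of_right_inverse h2
    rw [h1, mul_assoc, Matrix.mul_nonsing_inv _ hu, mul_one]
  obtain ⟨s1, c1⟩ := conj S₁ X P₁ hS₁ e1
  obtain ⟨s2, c2⟩ := conj S₂ Z P₂ hS₂ e2
  refine ⟨_, _, s1, s2, ?_⟩
  rw [c1, c2, ← LinearMap.toMatrix'_mul, ← e3, LinearMap.toMatrix'_toLin']
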